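/- arXiv:1608.03861 — 7 statements merged into one kernel-verified Lean document; each statement's English description precedes it below -/
import Mathlib

section
/- For every x ∈ E, the proximal gradient step monotonically decreases the norm of the composite gradient mapping: ‖∇̃F(p(x))‖ ≤ ‖∇̃F(x)‖, i.e., L‖p(p(x)) − p(x)‖ ≤ L‖p(x) − x‖. -/
/-!
Write `b = p x`, `c = p b`, `d = b - x`, `e = c - b`, `g = f' b - f' x`. First-order optimality of
the two proximal steps (`prox_optimality`), tested against each other's minimizer, gives
`L ‖e‖² ≤ ⟪L d - g, e⟫`, hence `L ‖e‖ ≤ ‖L d - g‖` by Cauchy–Schwarz. The gradient step is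
nonexpansive, `‖L d - g‖ ≤ L ‖d‖`, because `‖g‖² ≤ 2 L ⟪g, d⟫` (`grad_cocoercive`). This
cocoercivity (with half the sharp constant, which is enough here) comes from comparing the tangent
lower bound at `u` with the quadratic upper bound at `v` at the point `v - (f' v - f' u) / L`.
-/

open scoped RealInnerProductSpace

lemma nonneg_of_forall_small {A B : ℝ}
    (h : ∀ t : ℝ, 0 < t → t ≤ 1 → 0 ≤ t * A + t ^ 2 * B) : 0 ≤ A := by
  by_contra! hA
  have hD : 0 < |B| - A := by linarith [abs_nonneg B]
  -- At `t = -A / (2 (|B| - A))` the linear term dominates the quadratic one.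
  have ht : 0 < -A / (2 * (|B| - A)) := div_pos (by linarith) (by linarith)
  have h1 : -A / (2 * (|B| - A)) ≤ 1 := by
    rw [div_le_one (by linarith)]
    linarith [abs_nonneg B]
  have key := h _ ht h1
  have ht' : -A / (2 * (|B| - A)) * (2 * (|B| - A)) = -A := by
    field_simp
  generalize -A / (2 * (|B| - A)) = t at *
  have h2 : 0 ≤ A + t * B := by
    by_contra! hneg
    nlinarith
  nlinarith [le_abs_self B]

section

variable {E : Type*} [NormedAddCommGroup E] [InnerProductSpace ℝ E]

lemma hasDerivAt_line {f : E → ℝ} {f' : E → E}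
    (hf' : ∀ z : E, HasFDerivAt f (innerSL ℝ (f' z)) z) (u w : E) (t : ℝ) :
    HasDerivAt (fun s : ℝ => f (u + s • w)) ⟪f' (u + t • w), w⟫ t := by
  have h1 : HasDerivAt (fun s : ℝ => u + s • w) w t := by
    simpa using ((hasDerivAt_id t).smul_const w).const_add u
  exact (hf' (u + t • w)).comp_hasDerivAt t h1

lemma tangent_le {f : E → ℝ} {f' : E → E} (hf : ConvexOn ℝ Set.univ f)
    (hf' : ∀ z : E, HasFDerivAt f (innerSL ℝ (f' z)) z) (u v : E) :
    f u + ⟪f' u, v - u⟫ ≤ f v := by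
  have hc : ConvexOn ℝ Set.univ (fun s : ℝ => f (u + s • (v - u))) := by
    have := hf.comp_affineMap (AffineMap.lineMap u v : ℝ →ᵃ[ℝ] E)
    simpa [Function.comp_def, AffineMap.lineMap_apply, add_comm] using this
  have h := hc.le_slope_of_hasDerivAt (Set.mem_univ 0) (Set.mem_univ 1) one_pos
    (hasDerivAt_line hf' u (v - u) 0)
  simp [slope] at h
  linarith

/-- The descent lemma: `t ↦ f (u + t w) - t ⟪f' u, w⟫ - L t² ‖w‖² / 2` is nonincreasing for
`t ≥ 0`. -/
lemma le_quadratic {L : ℝ} {f : E → ℝ} {f' : E → E}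
    (hf' : ∀ z : E, HasFDerivAt f (innerSL ℝ (f' z)) z)
    (hLip : ∀ u v : E, ‖f' u - f' v‖ ≤ L * ‖u - v‖) (u w : E) :
    f (u + w) ≤ f u + ⟪f' u, w⟫ + L / 2 * ‖w‖ ^ 2 := by
  have hd : ∀ t : ℝ, HasDerivAt
      (fun s : ℝ => f (u + s • w) - s * ⟪f' u, w⟫ - s ^ 2 * (L / 2 * ‖w‖ ^ 2))
      (⟪f' (u + t • w), w⟫ - ⟪f' u, w⟫ - 2 * t * (L / 2 * ‖w‖ ^ 2)) t := fun t => by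
    have h := ((hasDerivAt_line hf' u w t).sub
      ((hasDerivAt_id t).mul_const ⟪f' u, w⟫)).sub
      ((hasDerivAt_pow 2 t).mul_const (L / 2 * ‖w‖ ^ 2))
    simpa [Pi.sub_def] using h
  have hanti := antitoneOn_of_deriv_nonpos (convex_Icc (0 : ℝ) 1)
    (fun t _ => (hd t).continuousAt.continuousWithinAt)
    (fun t _ => (hd t).differentiableAt.differentiableWithinAt)
    (fun t ht => by
      rw [interior_Icc] at ht
      rw [(hd t).deriv, ← inner_sub_left]
      have h1 := real_inner_le_norm (f' (u + t • w) - f' u) w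
      have h2 := hLip (u + t • w) u
      rw [add_sub_cancel_left, norm_smul, Real.norm_of_nonneg ht.1.le] at h2
      nlinarith [mul_le_mul_of_nonneg_right h2 (norm_nonneg w)])
  have h := hanti (Set.left_mem_Icc.2 zero_le_one) (Set.right_mem_Icc.2 zero_le_one) zero_le_one
  simp at h
  linarith

lemma grad_cocoercive {L : ℝ} (hL : 0 < L) {f : E → ℝ} {f' : E → E}
    (hf : ConvexOn ℝ Set.univ f)
    (hf' : ∀ z : E, HasFDerivAt f (innerSL ℝ (f' z)) z)
    (hLip : ∀ u v : E, ‖f' u - f' v‖ ≤ L * ‖u - v‖) (u v : E) :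
    ‖f' v - f' u‖ ^ 2 ≤ 2 * L * ⟪f' v - f' u, v - u⟫ := by
  have h1 := tangent_le hf hf' v u
  have h2 := tangent_le hf hf' u (v + (-L⁻¹) • (f' v - f' u))
  have h3 := le_quadratic hf' hLip v ((-L⁻¹) • (f' v - f' u))
  have e1 : ⟪f' u, v + (-L⁻¹) • (f' v - f' u) - u⟫
      = ⟪f' u, v - u⟫ - L⁻¹ * ⟪f' u, f' v - f' u⟫ := by
    rw [add_sub_right_comm, inner_add_right, real_inner_smul_right]
    ring
  have e2 : ⟪f' v, u - v⟫ = -⟪f' v, v - u⟫ := by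
    rw [← neg_sub, inner_neg_right]
  have e3 : ⟪f' v, f' v - f' u⟫ - ⟪f' u, f' v - f' u⟫ = ‖f' v - f' u‖ ^ 2 := by
    rw [← inner_sub_left, real_inner_self_eq_norm_sq]
  rw [real_inner_smul_right, norm_smul, norm_neg, norm_inv, Real.norm_of_nonneg hL.le] at h3
  rw [inner_sub_left]
  have h4 : L⁻¹ * ‖f' v - f' u‖ ^ 2 - L / 2 * (L⁻¹ * ‖f' v - f' u‖) ^ 2
      ≤ ⟪f' v, v - u⟫ - ⟪f' u, v - u⟫ := by
    rw [← e3] at *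
    rw [mul_sub]
    linarith
  have h5 : L⁻¹ * ‖f' v - f' u‖ ^ 2 - L / 2 * (L⁻¹ * ‖f' v - f' u‖) ^ 2
      = ‖f' v - f' u‖ ^ 2 / (2 * L) := by
    field_simp
    ring
  rw [h5, div_le_iff₀ (by positivity)] at h4
  linarith

/-- First-order optimality of a minimizer `b` of the proximal model at `y` with linear term `g`:
`-(g + L (b - y))` is a subgradient of `φ` at `b`. -/
lemma prox_optimality {L : ℝ} {φ : E → ℝ} (hφ : ConvexOn ℝ Set.univ φ) {y g b : E} {c : ℝ}
    (hb : IsMinOn (fun z => c + ⟪g, z - y⟫ + L / 2 * ‖z - y‖ ^ 2 + φ z) Set.univ b) (z : E) :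
    0 ≤ φ z - φ b + ⟪g + L • (b - y), z - b⟫ := by
  refine nonneg_of_forall_small (B := L / 2 * ‖z - b‖ ^ 2) fun t ht ht1 => ?_
  have hm := hb (Set.mem_univ (b + t • (z - b)))
  have hc := hφ.2 (Set.mem_univ b) (Set.mem_univ z) (sub_nonneg.2 ht1) ht.le (by ring)
  have e0 : (1 - t) • b + t • z = b + t • (z - b) := by module
  rw [e0] at hc
  simp only [Set.mem_ofPred_eq, smul_eq_mul] at hm hc
  rw [add_sub_right_comm, inner_add_right, norm_add_sq_real, real_inner_smul_right,
    real_inner_smul_right, norm_smul, Real.norm_of_nonneg ht.le] at hm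
  rw [inner_add_left, real_inner_smul_left]
  nlinarith

end

/-- the proximal gradient step monotonically decreases the norm of the
composite gradient mapping: `L‖p(p x) − p x‖ ≤ L‖p x − x‖`. -/
theorem pgm_cgm_monotone
    {E : Type*} [NormedAddCommGroup E] [InnerProductSpace ℝ E]
    (L : ℝ) (hL : 0 < L)
    (f : E → ℝ) (f' : E → E) (φ : E → ℝ)
    (hf : ConvexOn ℝ Set.univ f)
    (hf' : ∀ z : E, HasFDerivAt f (innerSL ℝ (f' z)) z)
    (hLip : ∀ u v : E, ‖f' u - f' v‖ ≤ L * ‖u - v‖)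
    (hφ : ConvexOn ℝ Set.univ φ)
    (p : E → E)
    (hp : ∀ y : E, IsMinOn
      (fun z => f y + ⟪f' y, z - y⟫ + L / 2 * ‖z - y‖ ^ 2 + φ z) Set.univ (p y))
    (x : E) :
    L * ‖p (p x) - p x‖ ≤ L * ‖p x - x‖ := by
  have h1 := prox_optimality hφ (hp x) (p (p x))
  have h2 := prox_optimality hφ (hp (p x)) (p x)
  have h3 := grad_cocoercive hL hf hf' hLip x (p x)
  generalize p (p x) = c at *
  generalize p x = b at *
  have hstep : ‖L • (b - x) - (f' b - f' x)‖ ≤ L * ‖b - x‖ := by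
    refine le_of_sq_le_sq ?_ (by positivity)
    rw [norm_sub_sq_real, norm_smul, Real.norm_of_nonneg hL.le, real_inner_smul_left,
      real_inner_comm]
    linarith
  have hprox : L * ‖c - b‖ ^ 2 ≤ ⟪L • (b - x) - (f' b - f' x), c - b⟫ := by
    rw [← neg_sub c b, inner_neg_right] at h2
    simp only [inner_add_left, inner_sub_left (f' b), inner_sub_left (L • (b - x)),
      real_inner_smul_left _ (c - b), real_inner_self_eq_norm_sq] at h1 h2 ⊢
    linarith
  have hcs := real_inner_le_norm (L • (b - x) - (f' b - f' x)) (c - b)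
  rcases (norm_nonneg (c - b)).eq_or_lt with h0 | h0
  · rw [← h0, mul_zero]
    positivity
  · refine le_trans (le_of_mul_le_mul_right ?_ h0) hstep
    linarith
end

section
/- Let the PGM iterates be x_{i+1} = p(x_i) for i = 0, …, N−1. Then for every N ≥ 2, ‖∇̃F(x_N)‖ = min_{0 ≤ i ≤ N} ‖∇̃F(x_i)‖ and ‖∇̃F(x_N)‖ ≤ 2LR / √((N−1)(N+2)). -/
/-!
Write `D i = ‖x i - p (x i)‖` and `F = f + φ`. The optimality condition of the proximal step,
combined with the gradient inequality and the descent lemma for `f`, gives the basic inequality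
`F (p y) + L/2 ‖z - p y‖² ≤ F z + L/2 ‖z - y‖²` (`pgm_step`).
Cocoercivity of `f'` makes `p` nonexpansive (`pgm_nonexpansive`), so `D` is nonincreasing along the
iterates; this is the first claim.

For the second claim, the basic inequality at `z = xs` and at `z = x k` (weighted by `k`) shows that
`k (F (x k) - F xs) + L/2 ‖x k - xs‖² + L/2 ∑_{i<k} i (D i)²` is nonincreasing in `k`. With
`D i ≥ D N`, and one further proximal step from `x N`, this yields `N (N + 1) / 2 * (D N)² ≤ R²`,
which is stronger than the stated bound because `(N - 1) (N + 2) ≤ 2 N (N + 1)`.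
-/

open scoped RealInnerProductSpace

section Aux

variable {E : Type*} [NormedAddCommGroup E] [InnerProductSpace ℝ E]

lemma pgm_hasDerivAt_line {f : E → ℝ} {f' : E → E}
    (hgrad : ∀ z : E, HasFDerivAt f (innerSL ℝ (f' z)) z) (y v : E) (t : ℝ) :
    HasDerivAt (fun s : ℝ => f (y + s • v)) ⟪f' (y + t • v), v⟫ t := by
  have h1 : HasDerivAt (fun s : ℝ => y + s • v) v t := by
    simpa using ((hasDerivAt_id t).smul_const v).const_add y
  exact (hgrad (y + t • v)).comp_hasDerivAt t h1

lemma pgm_descent {L : ℝ} {f : E → ℝ} {f' : E → E}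
    (hgrad : ∀ z : E, HasFDerivAt f (innerSL ℝ (f' z)) z)
    (hLip : ∀ u v : E, ‖f' u - f' v‖ ≤ L * ‖u - v‖) (y z : E) :
    f z ≤ f y + ⟪f' y, z - y⟫ + L / 2 * ‖z - y‖ ^ 2 := by
  set v := z - y with hv
  -- The gap between `f` and its quadratic upper model decreases along the segment from `y` to `z`.
  have hd : ∀ t : ℝ, HasDerivAt
      (fun s : ℝ => f (y + s • v) - s * ⟪f' y, v⟫ - s ^ 2 * (L / 2 * ‖v‖ ^ 2))
      (⟪f' (y + t • v), v⟫ - ⟪f' y, v⟫ - 2 * t * (L / 2 * ‖v‖ ^ 2)) t := by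
    intro t
    have h2 := (hasDerivAt_id t).mul_const ⟪f' y, v⟫
    have h3 := (hasDerivAt_pow 2 t).mul_const (L / 2 * ‖v‖ ^ 2)
    refine (((pgm_hasDerivAt_line hgrad y v t).sub h2).sub h3).congr_deriv ?_
    simp
  have hanti := antitoneOn_of_deriv_nonpos (convex_Icc (0 : ℝ) 1)
    (fun t _ => (hd t).continuousAt.continuousWithinAt)
    (fun t _ => (hd t).differentiableAt.differentiableWithinAt)
    (fun t ht => by
      rw [interior_Icc] at ht
      rw [(hd t).deriv]
      have h1 : ⟪f' (y + t • v) - f' y, v⟫ ≤ ‖f' (y + t • v) - f' y‖ * ‖v‖ :=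
        real_inner_le_norm _ _
      have h2 := hLip (y + t • v) y
      rw [add_sub_cancel_left, norm_smul, Real.norm_of_nonneg ht.1.le] at h2
      have h3 := mul_le_mul_of_nonneg_right h2 (norm_nonneg v)
      rw [inner_sub_left] at h1
      nlinarith)
  have h01 := hanti (Set.left_mem_Icc.2 zero_le_one) (Set.right_mem_Icc.2 zero_le_one) zero_le_one
  have hz : y + v = z := by rw [hv]; abel
  simp [hz] at h01
  linarith

lemma pgm_gradient_ineq {f : E → ℝ} {f' : E → E} (hf : ConvexOn ℝ Set.univ f)
    (hgrad : ∀ z : E, HasFDerivAt f (innerSL ℝ (f' z)) z) (y z : E) :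
    f y + ⟪f' y, z - y⟫ ≤ f z := by
  have hc : ConvexOn ℝ Set.univ (fun s : ℝ => f (y + s • (z - y))) := by
    have h := hf.comp_affineMap (AffineMap.lineMap y z : ℝ →ᵃ[ℝ] E)
    rw [Set.preimage_univ] at h
    refine h.congr fun s _ => ?_
    simp [AffineMap.lineMap_apply, add_comm]
  have hd := pgm_hasDerivAt_line hgrad y (z - y) 0
  have h := hc.le_slope_of_hasDerivAt (Set.mem_univ 0) (Set.mem_univ 1) zero_lt_one hd
  simp [slope_def_field] at h
  linarith

/-- Cocoercivity of the gradient (Baillon–Haddad): the gradient inequality at `u` and the descent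
lemma at `v` are compared at the point `v - L⁻¹ (f' v - f' u)`, and the result is symmetrized. -/
lemma pgm_cocoercive {L : ℝ} (hL : 0 < L) {f : E → ℝ} {f' : E → E} (hf : ConvexOn ℝ Set.univ f)
    (hgrad : ∀ z : E, HasFDerivAt f (innerSL ℝ (f' z)) z)
    (hLip : ∀ u v : E, ‖f' u - f' v‖ ≤ L * ‖u - v‖) (u v : E) :
    ‖f' u - f' v‖ ^ 2 ≤ L * ⟪f' u - f' v, u - v⟫ := by
  have key : ∀ u v : E,
      f u + ⟪f' u, v - u⟫ + 1 / (2 * L) * ‖f' v - f' u‖ ^ 2 ≤ f v := by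
    intro u v
    set w := f' v - f' u with hw
    have h1 := pgm_gradient_ineq hf hgrad u (v - L⁻¹ • w)
    have h2 := pgm_descent hgrad hLip v (v - L⁻¹ • w)
    have e1 : v - L⁻¹ • w - u = (v - u) - L⁻¹ • w := by abel
    have e2 : v - L⁻¹ • w - v = -(L⁻¹ • w) := by abel
    rw [e1, inner_sub_right, real_inner_smul_right] at h1
    rw [e2, inner_neg_right, real_inner_smul_right, norm_neg, norm_smul, mul_pow,
      Real.norm_of_nonneg (inv_nonneg.2 hL.le)] at h2
    have e3 : ⟪f' v, w⟫ - ⟪f' u, w⟫ = ‖w‖ ^ 2 := by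
      rw [← inner_sub_left, ← hw, real_inner_self_eq_norm_sq]
    have e4 : L / 2 * (L⁻¹ ^ 2 * ‖w‖ ^ 2) = 1 / (2 * L) * ‖w‖ ^ 2 := by field_simp
    have e5 : L⁻¹ * ⟪f' v, w⟫ - L⁻¹ * ⟪f' u, w⟫ = 2 * (1 / (2 * L) * ‖w‖ ^ 2) := by
      rw [← mul_sub, e3]; field_simp
    linarith
  have h1 := key u v
  have h2 := key v u
  rw [norm_sub_rev] at h1
  have e : ⟪f' u - f' v, u - v⟫ = -⟪f' u, v - u⟫ - ⟪f' v, u - v⟫ := by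
    rw [inner_sub_left, ← neg_sub u v, inner_neg_right]; ring
  have h3 : 2 * (1 / (2 * L) * ‖f' u - f' v‖ ^ 2) ≤ ⟪f' u - f' v, u - v⟫ := by linarith
  have h4 := mul_le_mul_of_nonneg_left h3 hL.le
  have e4 : L * (2 * (1 / (2 * L) * ‖f' u - f' v‖ ^ 2)) = ‖f' u - f' v‖ ^ 2 := by field_simp
  linarith

/-- First-order optimality of the proximal step: `-(f' y + L (q - y))` is a subgradient of `φ`
at `q`. -/
lemma pgm_prox_opt {L : ℝ} {φ : E → ℝ} (hφ : ConvexOn ℝ Set.univ φ) {c : ℝ} {g y q : E}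
    (hq : IsMinOn (fun z => c + ⟪g, z - y⟫ + L / 2 * ‖z - y‖ ^ 2 + φ z) Set.univ q) (z : E) :
    φ q ≤ φ z + ⟪g, z - q⟫ + L * ⟪q - y, z - q⟫ := by
  -- Comparison with `q + t (z - q)`, divided by `t`; the quadratic error vanishes as `t → 0`.
  have key : ∀ t ∈ Set.Ioo (0 : ℝ) 1,
      φ q ≤ φ z + ⟪g, z - q⟫ + L * ⟪q - y, z - q⟫ + t * (L / 2 * ‖z - q‖ ^ 2) := by
    intro t ht
    have h1 := hq (Set.mem_univ (q + t • (z - q)))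
    simp only [Set.mem_ofPred_eq] at h1
    have h2 := hφ.2 (Set.mem_univ q) (Set.mem_univ z) (sub_nonneg.2 ht.2.le) ht.1.le
      (sub_add_cancel 1 t)
    have e0 : (1 - t) • q + t • z = q + t • (z - q) := by module
    have e1 : q + t • (z - q) - y = (q - y) + t • (z - q) := by abel
    rw [e0] at h2
    rw [e1, inner_add_right, real_inner_smul_right, norm_add_sq_real, real_inner_smul_right,
      norm_smul, mul_pow, Real.norm_of_nonneg ht.1.le] at h1
    simp only [smul_eq_mul] at h2
    refine le_of_mul_le_mul_left ?_ ht.1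
    nlinarith
  have ht : Filter.Tendsto
      (fun t : ℝ => φ z + ⟪g, z - q⟫ + L * ⟪q - y, z - q⟫ + t * (L / 2 * ‖z - q‖ ^ 2))
      (nhdsWithin 0 (Set.Ioi 0)) (nhds (φ z + ⟪g, z - q⟫ + L * ⟪q - y, z - q⟫)) := by
    have hc : Continuous
      (fun t : ℝ => φ z + ⟪g, z - q⟫ + L * ⟪q - y, z - q⟫ + t * (L / 2 * ‖z - q‖ ^ 2)) := by
      fun_prop
    simpa using (hc.tendsto 0).mono_left nhdsWithin_le_nhds
  refine ge_of_tendsto ht ?_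
  filter_upwards [Ioo_mem_nhdsGT (zero_lt_one (α := ℝ))] with t h using key t h

lemma pgm_step {L : ℝ} {f : E → ℝ} {f' : E → E} {φ : E → ℝ} (hf : ConvexOn ℝ Set.univ f)
    (hgrad : ∀ z : E, HasFDerivAt f (innerSL ℝ (f' z)) z)
    (hLip : ∀ u v : E, ‖f' u - f' v‖ ≤ L * ‖u - v‖) (hφ : ConvexOn ℝ Set.univ φ) {y q : E}
    (hq : IsMinOn (fun z => f y + ⟪f' y, z - y⟫ + L / 2 * ‖z - y‖ ^ 2 + φ z) Set.univ q)
    (z : E) :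
    f q + φ q + L / 2 * ‖z - q‖ ^ 2 ≤ f z + φ z + L / 2 * ‖z - y‖ ^ 2 := by
  have h1 := pgm_prox_opt hφ hq z
  have h2 := pgm_gradient_ineq hf hgrad y z
  have h3 := pgm_descent hgrad hLip y q
  have e : z - y = (q - y) + (z - q) := by abel
  have e1 : ⟪f' y, z - y⟫ = ⟪f' y, q - y⟫ + ⟪f' y, z - q⟫ := by rw [e, inner_add_right]
  have e2 : ‖z - y‖ ^ 2 = ‖q - y‖ ^ 2 + 2 * ⟪q - y, z - q⟫ + ‖z - q‖ ^ 2 := by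
    rw [e, norm_add_sq_real]
  rw [e2]
  linarith

lemma pgm_nonexpansive {L : ℝ} (hL : 0 < L) {f : E → ℝ} {f' : E → E} {φ : E → ℝ}
    (hf : ConvexOn ℝ Set.univ f)
    (hgrad : ∀ z : E, HasFDerivAt f (innerSL ℝ (f' z)) z)
    (hLip : ∀ u v : E, ‖f' u - f' v‖ ≤ L * ‖u - v‖) (hφ : ConvexOn ℝ Set.univ φ)
    {p : E → E} (hp : ∀ y : E, IsMinOn
      (fun z => f y + ⟪f' y, z - y⟫ + L / 2 * ‖z - y‖ ^ 2 + φ z) Set.univ (p y)) (u v : E) :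
    ‖p u - p v‖ ≤ ‖u - v‖ := by
  have h1 := pgm_prox_opt hφ (hp u) (p v)
  have h2 := pgm_prox_opt hφ (hp v) (p u)
  have hco := pgm_cocoercive hL hf hgrad hLip u v
  have hsum : L * ‖p u - p v‖ ^ 2 ≤ ⟪L • (u - v) - (f' u - f' v), p u - p v⟫ := by
    rw [← neg_sub (p u) (p v), inner_neg_right, inner_neg_right] at h1
    have e : ⟪L • (u - v) - (f' u - f' v), p u - p v⟫ = L * ‖p u - p v‖ ^ 2
        - L * ⟪p u - u, p u - p v⟫ + L * ⟪p v - v, p u - p v⟫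
        - ⟪f' u, p u - p v⟫ + ⟪f' v, p u - p v⟫ := by
      rw [← real_inner_self_eq_norm_sq]
      simp only [inner_sub_left, real_inner_smul_left]
      ring
    rw [e]; linarith
  have hw : ‖L • (u - v) - (f' u - f' v)‖ ≤ L * ‖u - v‖ := by
    refine abs_le_of_sq_le_sq' ?_ (by positivity) |>.2
    rw [norm_sub_sq_real, norm_smul, Real.norm_of_nonneg hL.le, real_inner_smul_left,
      real_inner_comm]
    nlinarith [sq_nonneg ‖f' u - f' v‖]
  have h3 := real_inner_le_norm (L • (u - v) - (f' u - f' v)) (p u - p v)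
  have h4 := mul_le_mul_of_nonneg_right hw (norm_nonneg (p u - p v))
  rcases (norm_nonneg (p u - p v)).eq_or_lt with h0 | h0
  · rw [← h0]; exact norm_nonneg _
  · refine le_of_mul_le_mul_left ?_ (mul_pos hL h0)
    nlinarith

end Aux

/-- for the PGM iterates x_{i+1} = p(x_i), for N ≥ 2 the final composite
gradient mapping norm is the minimum over all iterates and is bounded by
2LR/√((N−1)(N+2)). -/
theorem pgm_cgm_bound
    {E : Type*} [NormedAddCommGroup E] [InnerProductSpace ℝ E]
    (L : ℝ) (hL : 0 < L)
    (f : E → ℝ) (f' : E → E) (φ : E → ℝ)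
    (hf : ConvexOn ℝ Set.univ f)
    (hgrad : ∀ z : E, HasFDerivAt f (innerSL ℝ (f' z)) z)
    (hLip : ∀ u v : E, ‖f' u - f' v‖ ≤ L * ‖u - v‖)
    (hφ : ConvexOn ℝ Set.univ φ)
    (p : E → E)
    (hp : ∀ y : E, IsMinOn
      (fun z => f y + ⟪f' y, z - y⟫ + L / 2 * ‖z - y‖ ^ 2 + φ z) Set.univ (p y))
    (xs : E) (hxs : IsMinOn (fun z => f z + φ z) Set.univ xs)
    (R : ℝ) (hR0 : 0 ≤ R)
    (N : ℕ) (hN : 2 ≤ N)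
    (x : ℕ → E) (hR : ‖x 0 - xs‖ ≤ R)
    (hx : ∀ i < N, x (i + 1) = p (x i)) :
    (∀ i ≤ N, L * ‖x N - p (x N)‖ ≤ L * ‖x i - p (x i)‖) ∧
      L * ‖x N - p (x N)‖ ≤ 2 * L * R / Real.sqrt (((N : ℝ) - 1) * ((N : ℝ) + 2)) := by
  have hstep : ∀ i < N, ‖x (i + 1) - p (x (i + 1))‖ ≤ ‖x i - p (x i)‖ := by
    intro i hi
    have h := pgm_nonexpansive hL hf hgrad hLip hφ hp (x i) (x (i + 1))
    rwa [← hx i hi] at h ⊢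
  have hmono : ∀ i ≤ N, ‖x N - p (x N)‖ ≤ ‖x i - p (x i)‖ := by
    intro i hi
    induction hi using Nat.decreasingInduction with
    | self => exact le_rfl
    | of_succ k hk ih => exact ih.trans (hstep k hk)
  refine ⟨fun i hi => mul_le_mul_of_nonneg_left (hmono i hi) hL.le, ?_⟩
  set D := ‖x N - p (x N)‖ with hD
  have hD0 : 0 ≤ D := norm_nonneg _
  have hdesc : ∀ y, f (p y) + φ (p y) + L / 2 * ‖y - p y‖ ^ 2 ≤ f y + φ y := by
    intro y
    simpa using pgm_step hf hgrad hLip hφ (hp y) y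
  -- The potential function, with each `D i` already replaced by its lower bound `D`.
  have hpot : ∀ k : ℕ, k ≤ N →
      k * (f (x k) + φ (x k) - (f xs + φ xs)) + L / 2 * ((k : ℝ) * (k - 1) / 2 * D ^ 2)
        + L / 2 * ‖xs - x k‖ ^ 2 ≤ L / 2 * R ^ 2 := by
    intro k
    induction k with
    | zero =>
      intro _
      have h : ‖xs - x 0‖ ^ 2 ≤ R ^ 2 := by
        rw [norm_sub_rev]
        exact pow_le_pow_left₀ (norm_nonneg _) hR 2
      simp only [Nat.cast_zero, zero_mul, zero_div, mul_zero, zero_add]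
      exact mul_le_mul_of_nonneg_left h (by positivity)
    | succ k ih =>
      intro hk
      have ih' := ih (by omega)
      have h1 := pgm_step hf hgrad hLip hφ (hp (x k)) xs
      have h2 := hdesc (x k)
      have h3 : D ^ 2 ≤ ‖x k - p (x k)‖ ^ 2 := pow_le_pow_left₀ hD0 (hmono k (by omega)) 2
      rw [← hx k (by omega)] at h1 h2 h3
      have h4 : f (x (k + 1)) + φ (x (k + 1)) + L / 2 * D ^ 2 ≤ f (x k) + φ (x k) := by
        nlinarith
      have h5 := mul_le_mul_of_nonneg_left h4 (Nat.cast_nonneg (α := ℝ) k)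
      push_cast
      linarith
  have hN1 : (2 : ℝ) ≤ N := by exact_mod_cast hN
  have hlast := hpot N le_rfl
  have hmin : f xs + φ xs ≤ f (p (x N)) + φ (p (x N)) := hxs (Set.mem_univ _)
  have hgap : L / 2 * D ^ 2 ≤ f (x N) + φ (x N) - (f xs + φ xs) := by
    linarith [hdesc (x N)]
  have hfin : (N : ℝ) * (N + 1) / 2 * D ^ 2 ≤ R ^ 2 := by
    have h1 := mul_le_mul_of_nonneg_left hgap (Nat.cast_nonneg (α := ℝ) N)
    have h2 : 0 ≤ L / 2 * ‖xs - x N‖ ^ 2 := by positivity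
    refine le_of_mul_le_mul_left ?_ (half_pos hL)
    linarith
  have hs : 0 < ((N : ℝ) - 1) * (N + 2) := mul_pos (by linarith) (by linarith)
  rw [le_div_iff₀ (Real.sqrt_pos.2 hs)]
  have hroot : D * Real.sqrt (((N : ℝ) - 1) * (N + 2)) ≤ 2 * R := by
    refine abs_le_of_sq_le_sq' ?_ (by positivity) |>.2
    rw [mul_pow, Real.sq_sqrt hs.le]
    nlinarith [mul_nonneg (by positivity : (0 : ℝ) ≤ N * (N + 1) + 2) (sq_nonneg D)]
  nlinarith [mul_le_mul_of_nonneg_left hroot hL.le]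
end

section
/- For every x ∈ E, the vector g := L(x − p(x)) − f'(x) is a subgradient of φ at p(x), i.e., φ(z) ≥ φ(p(x)) + ⟪g, z − p(x)⟫ for all z ∈ E; moreover the subgradient f'(p(x)) + g of F at p(x) satisfies ‖f'(p(x)) + g‖ ≤ 2L‖x − p(x)‖, i.e., its norm is at most twice the norm of the composite gradient mapping ∇̃F(x). -/
/-!
The subgradient inequality is the first-order optimality condition of the proximal subproblem.
Compare the objective at its minimizer `q = p x` with its value at `q + t • (z - q)`, `0 < t ≤ 1`:
convexity bounds `φ` there, and the smooth part is expanded exactly. After division by `t` this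
reads `0 ≤ D + t * (L / 2) * ‖z - q‖ ^ 2`, where `D` is the gap in the subgradient inequality, and
small `t` forces `0 ≤ D`. The norm bound is the triangle inequality combined with the Lipschitz
bound on `f'`.
-/

open scoped RealInnerProductSpace

/-- g := L(x − p(x)) − f'(x) is a subgradient of φ at p(x), and the
subgradient f'(p(x)) + g of F at p(x) has norm at most twice the norm of the
composite gradient mapping, i.e. at most 2L‖x − p(x)‖. -/
theorem subgradient_norm_le_two_cgm
    {E : Type*} [NormedAddCommGroup E] [InnerProductSpace ℝ E]
    (L : ℝ) (hL : 0 < L)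
    (f : E → ℝ) (f' : E → E) (φ : E → ℝ)
    (hf : ConvexOn ℝ Set.univ f)
    (hgrad : ∀ z : E, HasFDerivAt f (innerSL ℝ (f' z)) z)
    (hLip : ∀ u v : E, ‖f' u - f' v‖ ≤ L * ‖u - v‖)
    (hφ : ConvexOn ℝ Set.univ φ)
    (p : E → E)
    (hp : ∀ y : E, IsMinOn
      (fun z => f y + ⟪f' y, z - y⟫ + L / 2 * ‖z - y‖ ^ 2 + φ z) Set.univ (p y))
    (x : E) :
    (∀ z : E, φ (p x) + ⟪L • (x - p x) - f' x, z - p x⟫ ≤ φ z) ∧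
      ‖f' (p x) + (L • (x - p x) - f' x)‖ ≤ 2 * (L * ‖x - p x‖) := by
  constructor
  · intro z
    set q := p x with hq
    have key : ∀ t : ℝ, 0 < t → t ≤ 1 →
        0 ≤ (φ z - φ q - ⟪L • (x - q) - f' x, z - q⟫) + t * (L / 2 * ‖z - q‖ ^ 2) := by
      intro t ht ht1
      have hmin := isMinOn_iff.mp (hp x) (q + t • (z - q)) (Set.mem_univ _)
      have hconv := hφ.2 (Set.mem_univ q) (Set.mem_univ z)
        (sub_nonneg.mpr ht1) ht.le (sub_add_cancel 1 t)
      have hpt : (1 - t) • q + t • z = q + t • (z - q) := by module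
      rw [hpt] at hconv
      have hsplit : q + t • (z - q) - x = (q - x) + t • (z - q) := by abel
      have hneg : x - q = -(q - x) := by abel
      simp only [← hq] at hmin
      rw [hsplit, norm_add_sq_real, norm_smul, mul_pow, Real.norm_eq_abs, sq_abs,
        inner_add_right, inner_smul_right, inner_smul_right] at hmin
      simp only [smul_eq_mul] at hconv
      rw [hneg, inner_sub_left, real_inner_smul_left, inner_neg_left]
      refine nonneg_of_mul_nonneg_right (a := t) ?_ ht
      linarith
    by_contra hlt
    set D := φ z - φ q - ⟪L • (x - q) - f' x, z - q⟫ with hD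
    have hDneg : 0 < -D := by linarith
    have hc : 0 ≤ L / 2 * ‖z - q‖ ^ 2 := by positivity
    set c := L / 2 * ‖z - q‖ ^ 2
    -- With `t = -D / (-D + c)` the bound becomes `D + t * c = -D ^ 2 / (-D + c) < 0`.
    have hpos : 0 < -D + c := by linarith
    have h := key (-D / (-D + c)) (by positivity) ((div_le_one hpos).mpr (by linarith))
    have heq : D + -D / (-D + c) * c = -(D ^ 2 / (-D + c)) := by
      field_simp
      ring
    have : 0 < D ^ 2 / (-D + c) := div_pos (by nlinarith) hpos
    linarith
  · have hsum : f' (p x) + (L • (x - p x) - f' x) = (f' (p x) - f' x) + L • (x - p x) := by abel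
    have hl := hLip (p x) x
    rw [norm_sub_rev (p x) x] at hl
    have ht := norm_add_le (f' (p x) - f' x) (L • (x - p x))
    rw [norm_smul, Real.norm_of_nonneg hL.le] at ht
    rw [hsum]
    linarith
end

section
/- Let the fixed-step first-order method (FO) with step coefficients h be defined by y'_0 = x_0, x'_{k+1} = p(y'_k), and y'_{i+1} = y'_i + Σ_{k=0}^{i} h_{i+1,k}(x'_{k+1} − y'_k) for i ≥ 0. Then the FO sequence coincides with the GFPGM sequence: x'_i = x_i and y'_i = y_i for all i. -/
/-!
Both methods satisfy the same "three-sequence" relation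
`T i • (y i - x i) = t i • (z i - x i)`, where
`z i = x 0 + ∑ k < i, t k • (x (k + 1) - y k)` accumulates the weighted prox steps.
For GFPGM (`gfpgm_relation`) this is an induction on `i`. For FO (`fo_relation`), unrolling the
recursion gives `y i - x 0 = ∑ k < i, (∑ j = k+1..i, h j k) • (x (k + 1) - y k)`, so the terms
`t k - ∑ j, h j k` in the definition of `h` assemble exactly into `z i - y i`.
Since `T i ≠ 0`, the relation determines `y i` from `x i` and the earlier iterates, and
`x (i + 1) = p (y i)`; strong induction then identifies the two sequences.
-/

open scoped RealInnerProductSpace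

theorem gfpgm_relation {E : Type*} [AddCommGroup E] [Module ℝ E]
    (t T : ℕ → ℝ) (ht : ∀ i, t i ≠ 0) (hT : ∀ i, T i ≠ 0) (x y : ℕ → E) (hy0 : y 0 = x 0)
    (hy : ∀ i, y (i + 1) = x (i + 1)
        + ((T i - t i) * t (i + 1) / (t i * T (i + 1))) • (x (i + 1) - x i)
        + ((t i ^ 2 - T i) * t (i + 1) / (t i * T (i + 1))) • (x (i + 1) - y i)) (i : ℕ) :
    T i • (y i - x i)
      = t i • (x 0 + ∑ k ∈ Finset.range i, t k • (x (k + 1) - y k) - x i) := by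
  induction i with
  | zero => simp [hy0]
  | succ i ih =>
    have hz : x 0 + ∑ k ∈ Finset.range i, t k • (x (k + 1) - y k)
        = x i + (T i / t i) • (y i - x i) := by
      rw [div_eq_inv_mul, mul_smul, ih, inv_smul_smul₀ (ht i)]
      abel
    rw [Finset.sum_range_succ, ← add_assoc, hz, hy i]
    have h1 := ht i
    have h2 := hT (i + 1)
    match_scalars <;> field_simp <;> ring

/-- The FO iterates unrolled down to the initial point. -/
theorem fo_unrolled {E : Type*} [AddCommGroup E] [Module ℝ E]
    (h : ℕ → ℕ → ℝ) (y d : ℕ → E)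
    (hy : ∀ i, y (i + 1) = y i + ∑ k ∈ Finset.range (i + 1), h (i + 1) k • d k) (i : ℕ) :
    y i = y 0 + ∑ k ∈ Finset.range i, (∑ j ∈ Finset.Icc (k + 1) i, h j k) • d k := by
  induction i with
  | zero => simp
  | succ i ih =>
    have key : ∀ k ∈ Finset.range (i + 1), (∑ j ∈ Finset.Icc (k + 1) (i + 1), h j k) • d k
        = (∑ j ∈ Finset.Icc (k + 1) i, h j k) • d k + h (i + 1) k • d k := by
      intro k hk
      rw [Finset.mem_range] at hk
      rw [Finset.sum_Icc_succ_top (by omega), add_smul]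
    rw [hy i, Finset.sum_congr rfl key, Finset.sum_add_distrib, ← add_assoc]
    congr 1
    -- the extra term `k = i` carries the empty sum over `Icc (i + 1) i`
    rw [Finset.sum_range_succ]
    simpa using ih

theorem fo_relation {E : Type*} [AddCommGroup E] [Module ℝ E]
    (t T : ℕ → ℝ) (hT : ∀ i, T i ≠ 0) (h : ℕ → ℕ → ℝ)
    (hdiag : ∀ i, h (i + 1) i = 1 + (t i - 1) * t (i + 1) / T (i + 1))
    (hoff : ∀ i, ∀ k < i, h (i + 1) k
        = t (i + 1) / T (i + 1) * (t k - ∑ j ∈ Finset.Icc (k + 1) i, h j k))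
    (x y : ℕ → E) (hy0 : y 0 = x 0)
    (hy : ∀ i, y (i + 1) = y i + ∑ k ∈ Finset.range (i + 1), h (i + 1) k • (x (k + 1) - y k))
    (i : ℕ) :
    T i • (y i - x i)
      = t i • (x 0 + ∑ k ∈ Finset.range i, t k • (x (k + 1) - y k) - x i) := by
  cases i with
  | zero => simp [hy0]
  | succ i =>
    have hun := fo_unrolled h y (fun k => x (k + 1) - y k) hy i
    have key : ∀ k ∈ Finset.range i, h (i + 1) k • (x (k + 1) - y k)
        = (t (i + 1) / T (i + 1)) • (t k • (x (k + 1) - y k)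
          - (∑ j ∈ Finset.Icc (k + 1) i, h j k) • (x (k + 1) - y k)) := by
      intro k hk
      rw [hoff i k (Finset.mem_range.1 hk), mul_smul, sub_smul]
    have hS : ∑ k ∈ Finset.range i, (∑ j ∈ Finset.Icc (k + 1) i, h j k) • (x (k + 1) - y k)
        = y i - x 0 := by
      rw [← hy0]
      exact (sub_eq_of_eq_add' hun).symm
    rw [hy i, Finset.sum_range_succ, Finset.sum_congr rfl key, ← Finset.smul_sum,
      Finset.sum_sub_distrib, hS, hdiag, Finset.sum_range_succ]
    have h2 := hT (i + 1)
    match_scalars <;> field_simp <;> ring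

/-- the fixed-step first-order method (FO) with the GFPGM step
coefficients h produces exactly the GFPGM iterates. -/
theorem fo_eq_gfpgm
    {E : Type*} [NormedAddCommGroup E] [InnerProductSpace ℝ E]
    (L : ℝ) (hL : 0 < L)
    (f : E → ℝ) (f' : E → E) (φ : E → ℝ)
    (hf : ConvexOn ℝ Set.univ f)
    (hgrad : ∀ z : E, HasFDerivAt f (innerSL ℝ (f' z)) z)
    (hLip : ∀ u v : E, ‖f' u - f' v‖ ≤ L * ‖u - v‖)
    (hφ : ConvexOn ℝ Set.univ φ)
    (p : E → E)
    (hp : ∀ y : E, IsMinOn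
      (fun z => f y + ⟪f' y, z - y⟫ + L / 2 * ‖z - y‖ ^ 2 + φ z) Set.univ (p y))
    (t T : ℕ → ℝ) (ht0 : t 0 = 1) (htpos : ∀ i, 0 < t i)
    (hT : ∀ i, T i = ∑ l ∈ Finset.range (i + 1), t l)
    (htT : ∀ i, t i ^ 2 ≤ T i)
    (x y : ℕ → E)
    (hy0 : y 0 = x 0)
    (hx : ∀ i, x (i + 1) = p (y i))
    (hy : ∀ i, y (i + 1) = x (i + 1)
        + ((T i - t i) * t (i + 1) / (t i * T (i + 1))) • (x (i + 1) - x i)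
        + ((t i ^ 2 - T i) * t (i + 1) / (t i * T (i + 1))) • (x (i + 1) - y i))
    (h : ℕ → ℕ → ℝ)
    (hdiag : ∀ i, h (i + 1) i = 1 + (t i - 1) * t (i + 1) / T (i + 1))
    (hoff : ∀ i, ∀ k < i, h (i + 1) k
        = t (i + 1) / T (i + 1) * (t k - ∑ j ∈ Finset.Icc (k + 1) i, h j k))
    (x' y' : ℕ → E)
    (hx'0 : x' 0 = x 0) (hy'0 : y' 0 = x 0)
    (hx' : ∀ k, x' (k + 1) = p (y' k))
    (hy' : ∀ i, y' (i + 1) = y' i + ∑ k ∈ Finset.range (i + 1), h (i + 1) k • (x' (k + 1) - y' k)) :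
    ∀ i, x' i = x i ∧ y' i = y i := by
  have hTne : ∀ i, T i ≠ 0 := fun i => by
    rw [hT i]
    exact (Finset.sum_pos (fun l _ => htpos l) (by simp)).ne'
  have hG := gfpgm_relation t T (fun i => (htpos i).ne') hTne x y hy0 hy
  have hF := fo_relation t T hTne h hdiag hoff x' y' (hy'0.trans hx'0.symm) hy'
  intro i
  induction i using Nat.strong_induction_on with
  | _ i ih =>
    have hxi : x' i = x i := by
      cases i with
      | zero => exact hx'0
      | succ i => rw [hx', hx, (ih i (Nat.lt_succ_self i)).2]
    have hsum : ∑ k ∈ Finset.range i, t k • (x' (k + 1) - y' k)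
        = ∑ k ∈ Finset.range i, t k • (x (k + 1) - y k) := by
      refine Finset.sum_congr rfl fun k hk => ?_
      rw [hx', hx, (ih k (Finset.mem_range.1 hk)).2]
    have hF' := hF i
    rw [hx'0, hsum, hxi, ← hG i] at hF'
    exact ⟨hxi, sub_left_injective (smul_right_injective E (hTne i) hF')⟩
end

section
/- For the GFPGM iterates, for every N ≥ 1, F(x_N) − F(x_*) ≤ L R² / (2 T_{N−1}). -/
/-!
The argument is a Lyapunov (estimate-sequence) argument. Minimality of the proximal step, convexity
of `f` and `φ`, and the descent lemma give, for `q = p y` and every `z`,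
`F q - F z ≤ L ⟪z - y, q - y⟫ - L / 2 ‖q - y‖²` (`gfpgm_prox_step`).
Put `u i = (T i • y i - (T i - t i) • x i) / t i`. The recursion for `y` says exactly that
`u (i + 1) = u i + t i • (x (i + 1) - y i)` (`gfpgm_aux_step`). Adding the inequality at `z = x i`
with weight `T i - t i = T (i - 1)` and at `z = xs` with weight `t i`, and using `t i ^ 2 ≤ T i`,
shows that `T (i - 1) * (F (x i) - F xs) + L / 2 ‖u i - xs‖²` does not increase with `i`;
its initial value is `L / 2 ‖x 0 - xs‖²`.
-/

open scoped RealInnerProductSpace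

lemma gfpgm_line {E : Type*} [NormedAddCommGroup E] [InnerProductSpace ℝ E]
    (f : E → ℝ) (f' : E → E) (hgrad : ∀ z : E, HasFDerivAt f (innerSL ℝ (f' z)) z)
    (a d : E) (s : ℝ) :
    HasDerivAt (fun s : ℝ => f (a + s • d)) ⟪f' (a + s • d), d⟫ s := by
  have h1 : HasDerivAt (fun s : ℝ => a + s • d) d s := by
    simpa using ((hasDerivAt_id s).smul_const d).const_add a
  exact (hgrad (a + s • d)).comp_hasDerivAt s h1

/-- Descent lemma: a function with `L`-Lipschitz gradient lies below its quadratic model. -/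
lemma gfpgm_descent {E : Type*} [NormedAddCommGroup E] [InnerProductSpace ℝ E]
    (L : ℝ) (f : E → ℝ) (f' : E → E)
    (hgrad : ∀ z : E, HasFDerivAt f (innerSL ℝ (f' z)) z)
    (hLip : ∀ u v : E, ‖f' u - f' v‖ ≤ L * ‖u - v‖) (a b : E) :
    f b ≤ f a + ⟪f' a, b - a⟫ + L / 2 * ‖b - a‖ ^ 2 := by
  set d := b - a with hd
  -- The gap to the quadratic model along the segment has nonpositive derivative.
  let g : ℝ → ℝ := fun s => f (a + s • d) - s * ⟪f' a, d⟫ - s ^ 2 * (L / 2 * ‖d‖ ^ 2)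
  have hg : ∀ s, HasDerivAt g
      (⟪f' (a + s • d), d⟫ - ⟪f' a, d⟫ - 2 * s * (L / 2 * ‖d‖ ^ 2)) s := by
    intro s
    have h2 : HasDerivAt (fun s : ℝ => s * ⟪f' a, d⟫) ⟪f' a, d⟫ s := by
      simpa using (hasDerivAt_id s).mul_const ⟪f' a, d⟫
    have h3 : HasDerivAt (fun s : ℝ => s ^ 2 * (L / 2 * ‖d‖ ^ 2))
        (2 * s * (L / 2 * ‖d‖ ^ 2)) s := by
      simpa using (hasDerivAt_pow 2 s).mul_const (L / 2 * ‖d‖ ^ 2)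
    exact ((gfpgm_line f f' hgrad a d s).sub h2).sub h3
  have hanti : AntitoneOn g (Set.Icc 0 1) := by
    refine antitoneOn_of_deriv_nonpos (convex_Icc 0 1)
      (fun s _ => (hg s).continuousAt.continuousWithinAt)
      (fun s _ => (hg s).differentiableAt.differentiableWithinAt) ?_
    intro s hs
    rw [interior_Icc] at hs
    rw [(hg s).deriv]
    have h4 := hLip (a + s • d) a
    rw [add_sub_cancel_left, norm_smul, Real.norm_of_nonneg hs.1.le] at h4
    have h5 := real_inner_le_norm (f' (a + s • d) - f' a) d
    rw [inner_sub_left] at h5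
    have h6 := mul_le_mul_of_nonneg_right h4 (norm_nonneg d)
    linarith
  have h := hanti (Set.left_mem_Icc.2 zero_le_one) (Set.right_mem_Icc.2 zero_le_one) zero_le_one
  have hb : a + d = b := by simp [hd]
  simp only [g, one_smul, zero_smul, hb, add_zero] at h
  linarith

lemma gfpgm_gradient_ineq {E : Type*} [NormedAddCommGroup E] [InnerProductSpace ℝ E]
    (f : E → ℝ) (f' : E → E) (hf : ConvexOn ℝ Set.univ f)
    (hgrad : ∀ z : E, HasFDerivAt f (innerSL ℝ (f' z)) z) (a b : E) :
    f a + ⟪f' a, b - a⟫ ≤ f b := by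
  have hc : ConvexOn ℝ Set.univ (fun s : ℝ => f (a + s • (b - a))) := by
    have h := hf.comp_affineMap (AffineMap.lineMap (k := ℝ) a b)
    simpa [Function.comp_def, AffineMap.lineMap_apply, add_comm] using h
  have h := hc.le_slope_of_hasDerivAt (Set.mem_univ 0) (Set.mem_univ 1) zero_lt_one
    (gfpgm_line f f' hgrad a (b - a) 0)
  simp [slope_def_field] at h
  linarith

/-- Variational inequality for the proximal step: `-g - L (q - y)` is a subgradient of `φ` at the
minimizer `q` of the proximal model with linear part `g`. -/
lemma gfpgm_prox_subgrad {E : Type*} [NormedAddCommGroup E] [InnerProductSpace ℝ E]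
    (L c : ℝ) (hL : 0 < L) (φ : E → ℝ) (hφ : ConvexOn ℝ Set.univ φ) (g y q : E)
    (hq : IsMinOn (fun z => c + ⟪g, z - y⟫ + L / 2 * ‖z - y‖ ^ 2 + φ z) Set.univ q) (z : E) :
    φ q ≤ φ z + ⟪g, z - q⟫ + L * ⟪q - y, z - q⟫ := by
  -- Minimality tested at `q + s (z - q)` gives the claim up to an error of order `s`.
  have key : ∀ s : ℝ, 0 < s → s ≤ 1 →
      φ q ≤ φ z + ⟪g, z - q⟫ + L * ⟪q - y, z - q⟫ + s * (L / 2 * ‖z - q‖ ^ 2) := by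
    intro s hs hs1
    have h1 := isMinOn_univ_iff.1 hq (q + s • (z - q))
    have h2 := hφ.2 (Set.mem_univ q) (Set.mem_univ z) (sub_nonneg.2 hs1) hs.le (by ring)
    have e1 : (1 - s) • q + s • z = q + s • (z - q) := by module
    have e2 : q + s • (z - q) - y = (q - y) + s • (z - q) := by module
    rw [e1] at h2
    simp only [e2, smul_eq_mul] at h1 h2
    rw [norm_add_sq_real, inner_add_right, inner_smul_right, inner_smul_right, norm_smul,
      Real.norm_of_nonneg hs.le] at h1
    refine le_of_mul_le_mul_left ?_ hs
    nlinarith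
  refine le_of_forall_pos_le_add fun ε hε => ?_
  set K := L / 2 * ‖z - q‖ ^ 2 with hK
  have hK0 : 0 ≤ K := by positivity
  have h := key (min 1 (ε / (K + 1))) (lt_min one_pos (by positivity)) (min_le_left _ _)
  have h2 : min 1 (ε / (K + 1)) * K ≤ ε := by
    calc min 1 (ε / (K + 1)) * K ≤ ε / (K + 1) * (K + 1) :=
          mul_le_mul (min_le_right _ _) (by linarith) hK0 (by positivity)
      _ = ε := by field_simp
  linarith

/-- One proximal gradient step from `y` to `q`, compared with an arbitrary point `z`. -/
lemma gfpgm_prox_step {E : Type*} [NormedAddCommGroup E] [InnerProductSpace ℝ E]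
    (L : ℝ) (hL : 0 < L) (f : E → ℝ) (f' : E → E) (φ : E → ℝ)
    (hf : ConvexOn ℝ Set.univ f)
    (hgrad : ∀ z : E, HasFDerivAt f (innerSL ℝ (f' z)) z)
    (hLip : ∀ u v : E, ‖f' u - f' v‖ ≤ L * ‖u - v‖)
    (hφ : ConvexOn ℝ Set.univ φ) (y q : E)
    (hq : IsMinOn
      (fun z => f y + ⟪f' y, z - y⟫ + L / 2 * ‖z - y‖ ^ 2 + φ z) Set.univ q) (z : E) :
    f q + φ q - (f z + φ z) ≤ L * ⟪z - y, q - y⟫ - L / 2 * ‖q - y‖ ^ 2 := by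
  have h1 := gfpgm_descent L f f' hgrad hLip y q
  have h2 := gfpgm_gradient_ineq f f' hf hgrad y z
  have h3 := gfpgm_prox_subgrad L (f y) hL φ hφ (f' y) y q hq z
  have e : z - q = (z - y) - (q - y) := by abel
  rw [e, inner_sub_right (f' y) (z - y), inner_sub_right (q - y) (z - y),
    real_inner_self_eq_norm_sq] at h3
  rw [real_inner_comm]
  linarith

/-- The momentum recursion, written for the auxiliary sequence
`u = (T • y - (T - t) • x) / t`: passing from `(x, y)` to `(x₁, y₁)` adds `t • (x₁ - y)`. -/
lemma gfpgm_aux_step {E : Type*} [NormedAddCommGroup E] [InnerProductSpace ℝ E]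
    (t t₁ T T₁ : ℝ) (ht : t ≠ 0) (ht₁ : t₁ ≠ 0) (hT₁ : T₁ ≠ 0)
    (x y x₁ y₁ : E)
    (hy : y₁ = x₁ + ((T - t) * t₁ / (t * T₁)) • (x₁ - x)
      + ((t ^ 2 - T) * t₁ / (t * T₁)) • (x₁ - y)) :
    (T₁ / t₁) • y₁ - ((T₁ - t₁) / t₁) • x₁
      = ((T / t) • y - ((T - t) / t) • x) + t • (x₁ - y) := by
  rw [hy]
  match_scalars
  all_goals field_simp
  all_goals try ring

/-- the GFPGM iterates satisfy F(x_N) − F(x_*) ≤ LR²/(2T_{N−1}) for N ≥ 1. -/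
theorem gfpgm_cost_bound
    {E : Type*} [NormedAddCommGroup E] [InnerProductSpace ℝ E]
    (L : ℝ) (hL : 0 < L)
    (f : E → ℝ) (f' : E → E) (φ : E → ℝ)
    (hf : ConvexOn ℝ Set.univ f)
    (hgrad : ∀ z : E, HasFDerivAt f (innerSL ℝ (f' z)) z)
    (hLip : ∀ u v : E, ‖f' u - f' v‖ ≤ L * ‖u - v‖)
    (hφ : ConvexOn ℝ Set.univ φ)
    (p : E → E)
    (hp : ∀ y : E, IsMinOn
      (fun z => f y + ⟪f' y, z - y⟫ + L / 2 * ‖z - y‖ ^ 2 + φ z) Set.univ (p y))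
    (xs : E) (hxs : IsMinOn (fun z => f z + φ z) Set.univ xs)
    (R : ℝ) (hR0 : 0 ≤ R)
    (t T : ℕ → ℝ) (ht0 : t 0 = 1) (htpos : ∀ i, 0 < t i)
    (hT : ∀ i, T i = ∑ l ∈ Finset.range (i + 1), t l)
    (htT : ∀ i, t i ^ 2 ≤ T i)
    (x y : ℕ → E)
    (hy0 : y 0 = x 0)
    (hx : ∀ i, x (i + 1) = p (y i))
    (hy : ∀ i, y (i + 1) = x (i + 1)
        + ((T i - t i) * t (i + 1) / (t i * T (i + 1))) • (x (i + 1) - x i)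
        + ((t i ^ 2 - T i) * t (i + 1) / (t i * T (i + 1))) • (x (i + 1) - y i))
    (hR : ‖x 0 - xs‖ ≤ R)
    (N : ℕ) (hN : 1 ≤ N) :
    f (x N) + φ (x N) - (f xs + φ xs) ≤ L * R ^ 2 / (2 * T (N - 1)) := by
  have hT0 : T 0 = 1 := by simp [hT, ht0]
  have hTs : ∀ i, T (i + 1) = T i + t (i + 1) := fun i => by
    rw [hT, hT, Finset.sum_range_succ]
  have hTpos : ∀ i, 0 < T i := fun i => lt_of_lt_of_le (pow_pos (htpos i) 2) (htT i)
  have hTt : ∀ i, 0 ≤ T i - t i := by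
    intro i
    cases i with
    | zero => simp [hT0, ht0]
    | succ i => linarith [hTs i, hTpos i]
  let u : ℕ → E := fun i => (T i / t i) • y i - ((T i - t i) / t i) • x i
  have hu0 : u 0 = x 0 := by simp [u, hT0, ht0, hy0]
  have hus : ∀ i, u (i + 1) = u i + t i • (x (i + 1) - y i) := fun i =>
    gfpgm_aux_step (t i) (t (i + 1)) (T i) (T (i + 1)) (htpos i).ne' (htpos _).ne'
      (hTpos _).ne' _ _ _ _ (hy i)
  -- The Lyapunov function does not increase.
  have step : ∀ i, T i * (f (x (i + 1)) + φ (x (i + 1)) - (f xs + φ xs))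
      + L / 2 * ‖u (i + 1) - xs‖ ^ 2
      ≤ (T i - t i) * (f (x i) + φ (x i) - (f xs + φ xs)) + L / 2 * ‖u i - xs‖ ^ 2 := by
    intro i
    have hstep := gfpgm_prox_step L hL f f' φ hf hgrad hLip hφ (y i) (x (i + 1))
      (by rw [hx]; exact hp (y i))
    have h1 := mul_le_mul_of_nonneg_left (hstep (x i)) (hTt i)
    have h2 := mul_le_mul_of_nonneg_left (hstep xs) (htpos i).le
    have e1 : u (i + 1) - xs = (u i - xs) + t i • (x (i + 1) - y i) := by rw [hus]; abel
    have e2 : (T i - t i) • (x i - y i) + t i • (xs - y i) = -(t i • (u i - xs)) := by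
      have := (htpos i).ne'
      simp only [u]
      match_scalars
      all_goals field_simp
      all_goals try ring
    have e3 := congrArg (fun w => ⟪w, x (i + 1) - y i⟫) e2
    simp only [inner_add_left, inner_neg_left, real_inner_smul_left] at e3
    rw [e1, norm_add_sq_real, inner_smul_right, norm_smul, Real.norm_of_nonneg (htpos i).le,
      mul_pow]
    have h3 := mul_le_mul_of_nonneg_right (htT i)
      (by positivity : 0 ≤ L / 2 * ‖x (i + 1) - y i‖ ^ 2)
    have e4 := congrArg (fun w => L * w) e3
    beta_reduce at e4
    linarith
  have main : ∀ i, T i * (f (x (i + 1)) + φ (x (i + 1)) - (f xs + φ xs))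
      + L / 2 * ‖u (i + 1) - xs‖ ^ 2 ≤ L / 2 * ‖x 0 - xs‖ ^ 2 := by
    intro i
    induction i with
    | zero =>
      have h := step 0
      rw [hu0] at h
      simpa [hT0, ht0] using h
    | succ i ih =>
      refine (step (i + 1)).trans (le_trans (le_of_eq ?_) ih)
      rw [hTs i, add_sub_cancel_right]
  obtain ⟨n, rfl⟩ := Nat.exists_eq_add_of_le' hN
  rw [Nat.add_sub_cancel, le_div_iff₀ (mul_pos two_pos (hTpos n))]
  have h1 := main n
  have h2 : 0 ≤ L / 2 * ‖u (n + 1) - xs‖ ^ 2 := by positivity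
  have h3 : L / 2 * ‖x 0 - xs‖ ^ 2 ≤ L / 2 * R ^ 2 := by gcongr
  linarith
end

section
/- Define the GFPGM' iterates by y'_0 = x_0 and, for i ≥ 0: x'_{i+1} = p(y'_i), z_{i+1} = x_0 − Σ_{k=0}^{i} t_k (y'_k − p(y'_k)), and y'_{i+1} = (1 − t_{i+1}/T_{i+1}) x'_{i+1} + (t_{i+1}/T_{i+1}) z_{i+1}. Then the GFPGM' sequence coincides with the GFPGM sequence: x'_i = x_i and y'_i = y_i for all i. -/
open scoped RealInnerProductSpace

/-! The partial sums `w i = x 0 - ∑ k < i, t k • (y' k - p (y' k))` (so that `z (i + 1) = w (i + 1)`)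
make `y' i` the average `(1 - t i / T i) • x' i + (t i / T i) • w i` for every `i`, including `i = 0`,
where `t 0 = T 0 = 1`. Solving this for `w i` and substituting it into
`w (i + 1) = w i - t i • (y' i - x' (i + 1))` eliminates the auxiliary sequence from the formula for
`y' (i + 1)`, which becomes the momentum recursion defining `y (i + 1)`. -/

/-- the GFPGM' iterates (Nesterov-style form with the auxiliary sequence z)
coincide with the GFPGM iterates. -/
theorem gfpgm'_eq_gfpgm
    {E : Type*} [NormedAddCommGroup E] [InnerProductSpace ℝ E]
    (L : ℝ) (hL : 0 < L)
    (f : E → ℝ) (f' : E → E) (φ : E → ℝ)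
    (hf : ConvexOn ℝ Set.univ f)
    (hgrad : ∀ z : E, HasFDerivAt f (innerSL ℝ (f' z)) z)
    (hLip : ∀ u v : E, ‖f' u - f' v‖ ≤ L * ‖u - v‖)
    (hφ : ConvexOn ℝ Set.univ φ)
    (p : E → E)
    (hp : ∀ y : E, IsMinOn
      (fun z => f y + ⟪f' y, z - y⟫ + L / 2 * ‖z - y‖ ^ 2 + φ z) Set.univ (p y))
    (t T : ℕ → ℝ) (ht0 : t 0 = 1) (htpos : ∀ i, 0 < t i)
    (hT : ∀ i, T i = ∑ l ∈ Finset.range (i + 1), t l)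
    (htT : ∀ i, t i ^ 2 ≤ T i)
    (x y : ℕ → E)
    (hy0 : y 0 = x 0)
    (hx : ∀ i, x (i + 1) = p (y i))
    (hy : ∀ i, y (i + 1) = x (i + 1)
        + ((T i - t i) * t (i + 1) / (t i * T (i + 1))) • (x (i + 1) - x i)
        + ((t i ^ 2 - T i) * t (i + 1) / (t i * T (i + 1))) • (x (i + 1) - y i))
    (x' y' z : ℕ → E)
    (hx'0 : x' 0 = x 0) (hy'0 : y' 0 = x 0)
    (hx' : ∀ i, x' (i + 1) = p (y' i))
    (hz : ∀ i, z (i + 1) = x 0 - ∑ k ∈ Finset.range (i + 1), t k • (y' k - p (y' k)))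
    (hy' : ∀ i, y' (i + 1) = (1 - t (i + 1) / T (i + 1)) • x' (i + 1)
        + (t (i + 1) / T (i + 1)) • z (i + 1)) :
    ∀ i, x' i = x i ∧ y' i = y i := by
  have hTpos : ∀ i, 0 < T i := fun i => by
    rw [hT]
    exact Finset.sum_pos (fun l _ => htpos l) (by simp)
  obtain ⟨w, hw⟩ : ∃ w : ℕ → E, ∀ i,
      w i = x 0 - ∑ k ∈ Finset.range i, t k • (y' k - p (y' k)) := ⟨_, fun _ => rfl⟩
  have hwsucc : ∀ i, w (i + 1) = w i - t i • (y' i - p (y' i)) := fun i => by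
    rw [hw, hw, Finset.sum_range_succ]
    abel
  have hzw : ∀ i, z (i + 1) = w (i + 1) := fun i => by rw [hz, hw]
  have hT0 : T 0 = 1 := by simp [hT, ht0]
  have havg : ∀ i, y' i = (1 - t i / T i) • x' i + (t i / T i) • w i := by
    intro i
    cases i with
    | zero => simp [hT0, ht0, hw, hy'0]
    | succ i => rw [hy', hzw]
  have hwsolve : ∀ i, w i = (T i / t i) • y' i - ((T i - t i) / t i) • x' i := by
    intro i
    have h1 := (htpos i).ne'
    have h2 := (hTpos i).ne'
    rw [havg i]
    match_scalars <;> field_simp <;> ring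
  intro i
  induction i with
  | zero => exact ⟨hx'0, hy'0.trans hy0.symm⟩
  | succ i ih =>
    obtain ⟨ihx, ihy⟩ := ih
    have hxs : x' (i + 1) = x (i + 1) := by rw [hx', hx, ihy]
    refine ⟨hxs, ?_⟩
    have h1 := (htpos i).ne'
    have h2 := (hTpos (i + 1)).ne'
    rw [hy', hzw, hwsucc, hwsolve, hxs, ihx, ihy, ← hx, hy]
    match_scalars <;> field_simp <;> ring
end

section
/- For the FPGM-OPG iterates (GFPGM run with the FPGM-OPG parameters), for every N ≥ 3, min_{0 ≤ i ≤ N} ‖∇̃F(x_i)‖ ≤ min( min_{0 ≤ i ≤ N−1} ‖∇̃F(y_i)‖, ‖∇̃F(x_N)‖ ) ≤ 2√6 · L R / (N √(N − 2)). -/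
/-!
The bound is a weighted energy estimate. With `d i = x (i+1) - y i`, the proximal gradient
inequality (`FPGM.prox_ineq`), applied at `x i` with weight `T i - t i` and at `xs` with weight
`t i`, shows that
`(T i - t i) * (F (x i) - F xs) + L/2 * ‖u i - xs‖²`, where `u i = x 0 + ∑_{l<i} t l • d l`,
decreases at each step by at least `L/2 * (T i - t i²) * ‖d i‖²` (`FPGM.energy`); the momentum
formula for `y` is exactly what makes `t i • u i = T i • y i - (T i - t i) • x i`.
Since `F (x N) - F xs ≥ L/2 * ‖x N - p (x N)‖²`, the squared smallest gradient mapping norm times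
`∑_{i<N} (T i - t i²) + T (N-1)` is at most `L² R²`. For the given parameters, `T i = t i²`
in the first half and `T i - t i²` is bounded below by an explicit quadratic polynomial in the
second half, so this total weight is at least `N² (N-2) / 24` (`FPGM.weight_bound`).

The comparison between the iterates `x` and `y` holds because `p` is nonexpansive
(`FPGM.p_nonexpansive`): the forward step is nonexpansive by cocoercivity of `f'` and the
backward step by monotonicity of the subdifferential of `φ`. Hence
`‖p y - p (p y)‖ ≤ ‖y - p y‖`.
-/

open scoped RealInnerProductSpace

namespace FPGM

/-! ### Smooth convex functions and the proximal gradient map -/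

section Basic

variable {E : Type*} [NormedAddCommGroup E] [InnerProductSpace ℝ E]
  {L : ℝ} {f : E → ℝ} {f' : E → E} {φ : E → ℝ} {p : E → E}

lemma hasDerivAt_line (hgrad : ∀ z : E, HasFDerivAt f (innerSL ℝ (f' z)) z) (a v : E) (s : ℝ) :
    HasDerivAt (fun s : ℝ => f (a + s • v)) ⟪f' (a + s • v), v⟫ s := by
  have h1 : HasDerivAt (fun s : ℝ => a + s • v) v s := by
    simpa using ((hasDerivAt_id s).smul_const v).const_add a
  exact (hgrad (a + s • v)).comp_hasDerivAt s h1

lemma le_of_forall_small {c d e : ℝ} (h : ∀ s : ℝ, 0 < s → s ≤ 1 → c ≤ d + s * e) : c ≤ d := by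
  by_contra hcd
  push Not at hcd
  have he : 0 < |e| + 1 := by positivity
  have hle : e ≤ |e| := le_abs_self e
  set s := min 1 ((c - d) / 2 / (|e| + 1)) with hs
  have hs0 : 0 < s := lt_min one_pos (by apply div_pos <;> linarith)
  have h1 := h s hs0 (min_le_left _ _)
  have h2 : s * (|e| + 1) ≤ (c - d) / 2 := by
    rw [← le_div_iff₀ he]
    exact min_le_right _ _
  nlinarith

lemma grad_ineq (hf : ConvexOn ℝ Set.univ f)
    (hgrad : ∀ z : E, HasFDerivAt f (innerSL ℝ (f' z)) z) (a z : E) :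
    f a + ⟪f' a, z - a⟫ ≤ f z := by
  have hc : ConvexOn ℝ Set.univ (fun s : ℝ => f (a + s • (z - a))) := by
    refine ⟨convex_univ, fun s _ r _ α β hα hβ hαβ => ?_⟩
    have := hf.2 (Set.mem_univ (a + s • (z - a))) (Set.mem_univ (a + r • (z - a))) hα hβ hαβ
    have e : a + (α • s + β • r) • (z - a)
        = α • (a + s • (z - a)) + β • (a + r • (z - a)) := by
      have : a = (α + β) • a := by rw [hαβ, one_smul]
      nth_rewrite 1 [this]
      simp only [smul_eq_mul]
      module
    simpa only [e] using this
  have h0 := hasDerivAt_line hgrad a (z - a) 0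
  have := hc.le_slope_of_hasDerivAt (Set.mem_univ 0) (Set.mem_univ 1) one_pos h0
  simp [slope_def_field] at this
  linarith

lemma descent (hgrad : ∀ z : E, HasFDerivAt f (innerSL ℝ (f' z)) z)
    (hLip : ∀ u v : E, ‖f' u - f' v‖ ≤ L * ‖u - v‖) (a z : E) :
    f z ≤ f a + ⟪f' a, z - a⟫ + L / 2 * ‖z - a‖ ^ 2 := by
  set v := z - a with hv
  let g : ℝ → ℝ := fun s => s * ⟪f' a, v⟫ + L / 2 * ‖v‖ ^ 2 * s ^ 2 - f (a + s • v)
  have hg : ∀ s, HasDerivAt g (⟪f' a, v⟫ + L * ‖v‖ ^ 2 * s - ⟪f' (a + s • v), v⟫) s := by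
    intro s
    have h1 := (hasDerivAt_id s).mul_const ⟪f' a, v⟫
    have h2 := ((hasDerivAt_id s).pow 2).const_mul (L / 2 * ‖v‖ ^ 2)
    have h3 := (h1.add h2).sub (hasDerivAt_line hgrad a v s)
    refine h3.congr_deriv ?_
    simp
    ring
  have hmono : MonotoneOn g (Set.Icc 0 1) := by
    refine monotoneOn_of_deriv_nonneg (convex_Icc 0 1)
      (fun s _ => (hg s).continuousAt.continuousWithinAt)
      (fun s _ => (hg s).differentiableAt.differentiableWithinAt) ?_
    intro s hs
    rw [interior_Icc] at hs
    rw [(hg s).deriv]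
    have h1 : ⟪f' (a + s • v) - f' a, v⟫ ≤ ‖f' (a + s • v) - f' a‖ * ‖v‖ := real_inner_le_norm _ _
    have h2 := hLip (a + s • v) a
    rw [add_sub_cancel_left, norm_smul, Real.norm_of_nonneg hs.1.le] at h2
    rw [inner_sub_left] at h1
    nlinarith [mul_le_mul_of_nonneg_right h2 (norm_nonneg v)]
  have := hmono (Set.left_mem_Icc.2 zero_le_one) (Set.right_mem_Icc.2 zero_le_one) zero_le_one
  simp only [g] at this
  simp [hv] at this
  linarith

/-- The Baillon–Haddad inequality for a convex function with `L`-Lipschitz gradient. -/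
lemma cocoercive (hL : 0 < L) (hf : ConvexOn ℝ Set.univ f)
    (hgrad : ∀ z : E, HasFDerivAt f (innerSL ℝ (f' z)) z)
    (hLip : ∀ u v : E, ‖f' u - f' v‖ ≤ L * ‖u - v‖) (u v : E) :
    ‖f' u - f' v‖ ^ 2 ≤ L * ⟪f' u - f' v, u - v⟫ := by
  have key : ∀ u v : E, f u + ⟪f' u, v - u⟫ + 1 / (2 * L) * ‖f' v - f' u‖ ^ 2 ≤ f v := by
    intro u v
    -- A gradient step from `v` for the function `f - ⟪f' u, ·⟫`, which is minimal at `u`.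
    have h1 := grad_ineq hf hgrad u (v - (1 / L) • (f' v - f' u))
    have h2 := descent hgrad hLip v (v - (1 / L) • (f' v - f' u))
    have e1 : v - (1 / L) • (f' v - f' u) - v = - ((1 / L) • (f' v - f' u)) := by abel
    have e2 : v - (1 / L) • (f' v - f' u) - u = (v - u) - (1 / L) • (f' v - f' u) := by abel
    rw [e1, norm_neg, norm_smul, inner_neg_right, inner_smul_right, mul_pow, Real.norm_eq_abs,
      sq_abs] at h2
    rw [e2, inner_sub_right, inner_smul_right] at h1
    have e3 : ⟪f' v, f' v - f' u⟫ - ⟪f' u, f' v - f' u⟫ = ‖f' v - f' u‖ ^ 2 := by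
      rw [← inner_sub_left, real_inner_self_eq_norm_sq]
    have e4 : L / 2 * ((1 / L) ^ 2 * ‖f' v - f' u‖ ^ 2) = 1 / (2 * L) * ‖f' v - f' u‖ ^ 2 := by
      field_simp
    have e5 : 1 / L * ⟪f' v, f' v - f' u⟫ - 1 / L * ⟪f' u, f' v - f' u⟫
        = 2 * (1 / (2 * L) * ‖f' v - f' u‖ ^ 2) := by
      rw [← mul_sub, e3]; field_simp
    linarith
  have h1 := key u v
  have h2 := key v u
  rw [norm_sub_rev] at h1
  have e : ⟪f' u - f' v, u - v⟫ = - ⟪f' u, v - u⟫ - ⟪f' v, u - v⟫ := by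
    rw [inner_sub_left, ← neg_sub v u, inner_neg_right, inner_neg_right]
  have h3 : 1 / L * ‖f' u - f' v‖ ^ 2 ≤ ⟪f' u - f' v, u - v⟫ := by
    have : 1 / L * ‖f' u - f' v‖ ^ 2 = 2 * (1 / (2 * L) * ‖f' u - f' v‖ ^ 2) := by field_simp
    linarith
  calc ‖f' u - f' v‖ ^ 2 = L * (1 / L * ‖f' u - f' v‖ ^ 2) := by field_simp
    _ ≤ _ := mul_le_mul_of_nonneg_left h3 hL.le

/-- First-order optimality of `p y`: the vector `-(f' y + L (p y - y))` is a subgradient of `φ`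
at `p y`. -/
lemma prox_subgrad (hφ : ConvexOn ℝ Set.univ φ)
    (hp : ∀ y : E, IsMinOn
      (fun z => f y + ⟪f' y, z - y⟫ + L / 2 * ‖z - y‖ ^ 2 + φ z) Set.univ (p y)) (y z : E) :
    φ (p y) ≤ φ z + ⟪f' y, z - p y⟫ + L * ⟪p y - y, z - p y⟫ := by
  refine le_of_forall_small (e := L / 2 * ‖z - p y‖ ^ 2) fun s hs0 hs1 => ?_
  have h1 := isMinOn_iff.1 (hp y) (p y + s • (z - p y)) (Set.mem_univ _)
  have h2 := hφ.2 (Set.mem_univ (p y)) (Set.mem_univ z) (sub_nonneg.2 hs1) hs0.le (by ring)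
  have e : (1 - s) • p y + s • z = p y + s • (z - p y) := by module
  rw [e] at h2
  have e2 : p y + s • (z - p y) - y = (p y - y) + s • (z - p y) := by abel
  simp only [e2, inner_add_right, inner_smul_right, norm_add_sq_real, norm_smul, mul_pow,
    Real.norm_eq_abs, sq_abs] at h1
  simp only [smul_eq_mul] at h2
  have h3 : s * φ (p y) ≤ s * (φ z + ⟪f' y, z - p y⟫ + L * ⟪p y - y, z - p y⟫
      + s * (L / 2 * ‖z - p y‖ ^ 2)) := by nlinarith
  exact le_of_mul_le_mul_left h3 hs0

/-- The proximal gradient inequality. -/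
lemma prox_ineq (hf : ConvexOn ℝ Set.univ f)
    (hgrad : ∀ z : E, HasFDerivAt f (innerSL ℝ (f' z)) z)
    (hLip : ∀ u v : E, ‖f' u - f' v‖ ≤ L * ‖u - v‖)
    (hφ : ConvexOn ℝ Set.univ φ)
    (hp : ∀ y : E, IsMinOn
      (fun z => f y + ⟪f' y, z - y⟫ + L / 2 * ‖z - y‖ ^ 2 + φ z) Set.univ (p y)) (y z : E) :
    f (p y) + φ (p y) + L / 2 * ‖p y - y‖ ^ 2 + L * ⟪y - z, p y - y⟫ ≤ f z + φ z := by
  have h1 := prox_subgrad hφ hp y z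
  have h2 := grad_ineq hf hgrad y z
  have h3 := descent hgrad hLip y (p y)
  have e : z - p y = (z - y) - (p y - y) := by abel
  rw [e, inner_sub_right _ (z - y), inner_sub_right _ (z - y), real_inner_self_eq_norm_sq] at h1
  have e2 : ⟪y - z, p y - y⟫ = - ⟪p y - y, z - y⟫ := by
    rw [real_inner_comm, ← inner_neg_right, neg_sub]
  rw [e2]
  linarith

lemma p_nonexpansive (hL : 0 < L) (hf : ConvexOn ℝ Set.univ f)
    (hgrad : ∀ z : E, HasFDerivAt f (innerSL ℝ (f' z)) z)
    (hLip : ∀ u v : E, ‖f' u - f' v‖ ≤ L * ‖u - v‖)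
    (hφ : ConvexOn ℝ Set.univ φ)
    (hp : ∀ y : E, IsMinOn
      (fun z => f y + ⟪f' y, z - y⟫ + L / 2 * ‖z - y‖ ^ 2 + φ z) Set.univ (p y)) (y z : E) :
    ‖p y - p z‖ ≤ ‖y - z‖ := by
  have h1 := prox_subgrad hφ hp y (p z)
  have h2 := prox_subgrad hφ hp z (p y)
  have hc := cocoercive hL hf hgrad hLip y z
  set w := L • (y - z) - (f' y - f' z) with hw
  have h3 : L * ‖p y - p z‖ ^ 2 ≤ ⟪w, p y - p z⟫ := by
    rw [← neg_sub (p y) (p z)] at h1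
    simp only [inner_neg_right] at h1
    have e : ⟪w, p y - p z⟫ = L * ‖p y - p z‖ ^ 2 - L * ⟪p y - y, p y - p z⟫
        + L * ⟪p z - z, p y - p z⟫ - ⟪f' y, p y - p z⟫ + ⟪f' z, p y - p z⟫ := by
      rw [hw, ← real_inner_self_eq_norm_sq]
      simp only [inner_sub_left, inner_smul_left, RCLike.conj_to_real]
      ring
    linarith
  have h4 : ‖w‖ ^ 2 ≤ (L * ‖y - z‖) ^ 2 := by
    rw [hw, norm_sub_sq_real, norm_smul, inner_smul_left, real_inner_comm,
      Real.norm_of_nonneg hL.le]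
    simp only [RCLike.conj_to_real]
    nlinarith [sq_nonneg ‖f' y - f' z‖]
  have h5 : ‖w‖ ≤ L * ‖y - z‖ := le_of_sq_le_sq h4 (by positivity)
  have h6 := real_inner_le_norm w (p y - p z)
  rcases (norm_nonneg (p y - p z)).eq_or_lt with h0 | h0
  · rw [← h0]; exact norm_nonneg _
  · have h7 : (L * ‖p y - p z‖) * ‖p y - p z‖ ≤ (L * ‖y - z‖) * ‖p y - p z‖ := by
      nlinarith [mul_le_mul_of_nonneg_right h5 h0.le]
    exact le_of_mul_le_mul_left (le_of_mul_le_mul_right h7 h0) hL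

/-! ### The energy estimate -/

/-- The energy estimate for the accelerated iteration with positive parameters `t`. The vector
`x 0 + ∑ t i • (x (i+1) - y i)` is the auxiliary point whose squared distance to `xs` enters the
energy; `∑ i ∈ range n, t i` is `T (n - 1)`, with the value `0` at `n = 0`. -/
lemma energy (hf : ConvexOn ℝ Set.univ f)
    (hgrad : ∀ z : E, HasFDerivAt f (innerSL ℝ (f' z)) z)
    (hLip : ∀ u v : E, ‖f' u - f' v‖ ≤ L * ‖u - v‖)
    (hφ : ConvexOn ℝ Set.univ φ)
    (hp : ∀ y : E, IsMinOn
      (fun z => f y + ⟪f' y, z - y⟫ + L / 2 * ‖z - y‖ ^ 2 + φ z) Set.univ (p y))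
    (xs : E) (N : ℕ) (t T : ℕ → ℝ) (htpos : ∀ i < N, 0 < t i)
    (hT : ∀ i, T i = ∑ l ∈ Finset.range (i + 1), t l)
    (x y : ℕ → E) (hy0 : y 0 = x 0)
    (hx : ∀ i < N, x (i + 1) = p (y i))
    (hy : ∀ i, i + 1 < N → y (i + 1) = x (i + 1)
        + ((T i - t i) * t (i + 1) / (t i * T (i + 1))) • (x (i + 1) - x i)
        + ((t i ^ 2 - T i) * t (i + 1) / (t i * T (i + 1))) • (x (i + 1) - y i))
    (n : ℕ) (hn : n ≤ N) :
    (∑ i ∈ Finset.range n, t i) * (f (x n) + φ (x n) - (f xs + φ xs))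
      + L / 2 * ‖x 0 + ∑ i ∈ Finset.range n, t i • (x (i + 1) - y i) - xs‖ ^ 2
      + L / 2 * ∑ i ∈ Finset.range n, (T i - t i ^ 2) * ‖x (i + 1) - y i‖ ^ 2
      ≤ L / 2 * ‖x 0 - xs‖ ^ 2 := by
  have hS : ∀ i, T i - t i = ∑ l ∈ Finset.range i, t l := fun i => by
    rw [hT, Finset.sum_range_succ]; ring
  have hSnonneg : ∀ i ≤ N, 0 ≤ ∑ l ∈ Finset.range i, t l := fun i hi =>
    Finset.sum_nonneg fun l hl => (htpos l (by have := Finset.mem_range.1 hl; omega)).le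
  have hTpos : ∀ i < N, 0 < T i := fun i hi => by
    have := hS i
    linarith [hSnonneg i hi.le, htpos i hi]
  have hu : ∀ i < N, t i • (x 0 + ∑ l ∈ Finset.range i, t l • (x (l + 1) - y l))
      = T i • y i - (T i - t i) • x i := by
    intro i
    induction i with
    | zero => intro _; simp [hT, hy0]
    | succ i ih =>
      intro hi
      have hti := (htpos i (by omega)).ne'
      have hTi := (hTpos (i + 1) hi).ne'
      have h1 := ih (by omega)
      have h2 : T (i + 1) - t (i + 1) = T i := by rw [hS, hT]
      have h3 : T (i + 1) • y (i + 1) = T (i + 1) • x (i + 1)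
          + ((T i - t i) * t (i + 1) / t i) • (x (i + 1) - x i)
          + ((t i ^ 2 - T i) * t (i + 1) / t i) • (x (i + 1) - y i) := by
        have e : ∀ c : ℝ, T (i + 1) * (c / (t i * T (i + 1))) = c / t i := fun c => by
          field_simp
        rw [hy i hi, smul_add, smul_add, smul_smul, smul_smul, e, e]
      have h4 : x 0 + ∑ l ∈ Finset.range i, t l • (x (l + 1) - y l)
          = (1 / t i) • (T i • y i - (T i - t i) • x i) := by
        rw [← h1, smul_smul, one_div, inv_mul_cancel₀ hti, one_smul]
      rw [Finset.sum_range_succ, ← add_assoc, h4, h3, h2, ← h2]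
      match_scalars <;> field_simp <;> ring
  induction n with
  | zero => simp
  | succ n ih =>
    have hnN : n < N := hn
    have ih := ih hnN.le
    have hun := hu n hnN
    have p1 := prox_ineq hf hgrad hLip hφ hp (y n) (x n)
    have p2 := prox_ineq hf hgrad hLip hφ hp (y n) xs
    rw [← hx n hnN] at p1 p2
    rw [Finset.sum_range_succ (fun i => t i • (x (i + 1) - y i)),
      Finset.sum_range_succ (fun i => (T i - t i ^ 2) * ‖x (i + 1) - y i‖ ^ 2), ← hT n]
    rw [← hS n] at ih
    set u := x 0 + ∑ l ∈ Finset.range n, t l • (x (l + 1) - y l) with hudef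
    set d := x (n + 1) - y n with hd
    have e1 : x 0 + (∑ l ∈ Finset.range n, t l • (x (l + 1) - y l) + t n • d) - xs
        = (u - xs) + t n • d := by rw [hudef]; abel
    have e2 : t n * ⟪u - xs, d⟫ = (T n - t n) * ⟪y n - x n, d⟫ + t n * ⟪y n - xs, d⟫ := by
      have : t n • (u - xs) = (T n - t n) • (y n - x n) + t n • (y n - xs) := by
        rw [smul_sub, hun]; module
      rw [← real_inner_smul_left, this, inner_add_left, real_inner_smul_left,
        real_inner_smul_left]
    rw [e1, norm_add_sq_real, norm_smul, real_inner_smul_right, mul_pow, Real.norm_eq_abs, sq_abs]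
    have q1 := mul_le_mul_of_nonneg_left p1 ((hS n).symm ▸ hSnonneg n hnN.le)
    have q2 := mul_le_mul_of_nonneg_left p2 (htpos n hnN).le
    rw [e2]
    linarith

end Basic

/-! ### The parameters -/

/-- In the first half the parameters are those of the fast proximal gradient method. -/
lemma params_first {N : ℕ} {t T : ℕ → ℝ} (ht0 : t 0 = 1)
    (ht1 : ∀ i, i + 2 ≤ (N + 1) / 2 → t (i + 1) = (1 + Real.sqrt (1 + 4 * t i ^ 2)) / 2)
    (hT : ∀ i, T i = ∑ l ∈ Finset.range (i + 1), t l)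
    (i : ℕ) (hi : i + 1 ≤ (N + 1) / 2) : ((i : ℝ) + 2) / 2 ≤ t i ∧ T i = t i ^ 2 := by
  induction i with
  | zero => simp [hT, ht0]
  | succ i ih =>
    obtain ⟨h1, h2⟩ := ih (by omega)
    have h3 := ht1 i hi
    have hpos : (0 : ℝ) ≤ 1 + 4 * t i ^ 2 := by positivity
    have hsq := Real.sq_sqrt hpos
    have hi0 : (0 : ℝ) ≤ i := Nat.cast_nonneg i
    have h4 : 2 * t i ≤ Real.sqrt (1 + 4 * t i ^ 2) := Real.le_sqrt_of_sq_le (by nlinarith)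
    refine ⟨by push_cast; rw [h3]; linarith, ?_⟩
    rw [hT, Finset.sum_range_succ, ← hT, h2, h3]
    nlinarith

/-- In the second half, that is after the index `m = ⌈N/2⌉ - 1`, the sums of the explicit parameters
`t (m + k) = (N - m - k + 1) / 2` are added to `T m`, which is at least `(m + 2)² / 4`. -/
lemma params_second {N m : ℕ} {t T : ℕ → ℝ} (hm : (N + 1) / 2 = m + 1)
    (ht2 : ∀ i, (N + 1) / 2 ≤ i + 1 → i + 2 ≤ N → t (i + 1) = ((N : ℝ) - i) / 2)
    (hT : ∀ i, T i = ∑ l ∈ Finset.range (i + 1), t l)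
    (h0 : ((m : ℝ) + 2) ^ 2 / 4 ≤ T m) (k : ℕ) (hk : m + k + 1 ≤ N) :
    (((m : ℝ) + 2) ^ 2 + 2 * k * (N - m) - k ^ 2 + k) / 4 ≤ T (m + k) := by
  induction k with
  | zero => simpa using h0
  | succ k ih =>
    have h1 := ih (by omega)
    rw [← add_assoc, hT, Finset.sum_range_succ, ← hT, ht2 (m + k) (by omega) (by omega)]
    push_cast
    linarith

/-- Positivity of the parameters, nonnegativity of the weights `T i - t i²` and the lower bound
on their total. -/
lemma weight_bound {N : ℕ} (hN : 3 ≤ N) {t T : ℕ → ℝ} (ht0 : t 0 = 1)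
    (ht1 : ∀ i, i + 2 ≤ (N + 1) / 2 → t (i + 1) = (1 + Real.sqrt (1 + 4 * t i ^ 2)) / 2)
    (ht2 : ∀ i, (N + 1) / 2 ≤ i + 1 → i + 2 ≤ N → t (i + 1) = ((N : ℝ) - i) / 2)
    (hT : ∀ i, T i = ∑ l ∈ Finset.range (i + 1), t l) :
    (∀ i < N, 0 < t i) ∧ (∀ i < N, 0 ≤ T i - t i ^ 2) ∧
      (N : ℝ) ^ 2 * (N - 2) / 24
        ≤ ∑ i ∈ Finset.range N, (T i - t i ^ 2) + ∑ i ∈ Finset.range N, t i := by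
  obtain ⟨m, hm⟩ : ∃ m, (N + 1) / 2 = m + 1 := ⟨(N + 1) / 2 - 1, by omega⟩
  obtain ⟨K, hK⟩ : ∃ K, N = m + 1 + K := ⟨N - (m + 1), by omega⟩
  have hpar : (N = 2 * m + 1 ∨ N = 2 * m + 2) := by omega
  have hm1 : 1 ≤ m := by omega
  have hfirst := params_first (N := N) ht0 ht1 hT
  have hTm : ((m : ℝ) + 2) ^ 2 / 4 ≤ T m := by
    obtain ⟨h1, h2⟩ := hfirst m (by omega)
    rw [h2]
    have : (0 : ℝ) ≤ m := Nat.cast_nonneg m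
    nlinarith
  have hsecond := params_second hm ht2 hT hTm
  have htk : ∀ k, m + k + 2 ≤ N → t (m + k + 1) = ((N : ℝ) - (m + k : ℕ)) / 2 := fun k hk =>
    ht2 (m + k) (by omega) hk
  have hw : ∀ k, k < K →
      (((m : ℝ) + 2) ^ 2 - (N - m + 1) ^ 2 + 4 * (k + 1) * (N - m) + 3 * (k + 1)
        - 2 * (k + 1) ^ 2) / 4 ≤ T (m + 1 + k) - t (m + 1 + k) ^ 2 := by
    intro k hk
    have h1 := hsecond (k + 1) (by omega)
    have h2 := htk k (by omega)
    rw [show m + 1 + k = m + (k + 1) by ring]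
    rw [show m + k + 1 = m + (k + 1) by ring] at h2
    rw [h2]
    push_cast at h1 ⊢
    linarith
  have hmR : (1 : ℝ) ≤ m := by exact_mod_cast hm1
  have hNR : (N : ℝ) = m + 1 + K := by rw [hK]; push_cast; ring
  refine ⟨fun i hi => ?_, fun i hi => ?_, ?_⟩
  · by_cases him : i ≤ m
    · have := (hfirst i (by omega)).1
      have hi0 : (0 : ℝ) ≤ i := Nat.cast_nonneg i
      linarith
    · obtain ⟨k, rfl⟩ : ∃ k, i = m + k + 1 := ⟨i - m - 1, by omega⟩
      rw [htk k (by omega)]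
      have : ((m + k : ℕ) : ℝ) + 1 ≤ N := by exact_mod_cast (by omega : m + k + 1 ≤ N)
      linarith
  · by_cases him : i ≤ m
    · rw [(hfirst i (by omega)).2, sub_self]
    · obtain ⟨k, rfl⟩ : ∃ k, i = m + 1 + k := ⟨i - m - 1, by omega⟩
      have hk : k < K := by omega
      refine le_trans ?_ (hw k hk)
      have hkR : (k : ℝ) + 1 ≤ K := by exact_mod_cast hk
      have hk0 : (0 : ℝ) ≤ k := Nat.cast_nonneg k
      rcases hpar with h | h
      · have hKm : (K : ℝ) = m := by exact_mod_cast (by omega : K = m)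
        rw [hNR]
        rw [hKm] at hkR ⊢
        nlinarith
      · have hKm : (K : ℝ) = m + 1 := by exact_mod_cast (by omega : K = m + 1)
        rw [hNR]
        rw [hKm] at hkR ⊢
        nlinarith
  · have hsum : ∀ k ≤ K, (k * (((m : ℝ) + 2) ^ 2 - (N - m + 1) ^ 2)
        + (4 * (N - m) + 3) * (k * (k + 1) / 2) - k * (k + 1) * (2 * k + 1) / 3) / 4
        ≤ ∑ i ∈ Finset.range (m + 1 + k), (T i - t i ^ 2) := by
      intro k
      induction k with
      | zero =>
        intro _
        rw [Finset.sum_eq_zero]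
        · simp
        · intro i hi
          have := Finset.mem_range.1 hi
          rw [(hfirst i (by omega)).2, sub_self]
      | succ k ih =>
        intro hk
        rw [← add_assoc, Finset.sum_range_succ]
        have h1 := ih (by omega)
        have h2 := hw k (by omega)
        push_cast
        linarith
    have h1 := hsum K le_rfl
    have h2 := hsecond K (by omega)
    rw [hT, show m + K + 1 = N by omega] at h2
    rw [← hK] at h1
    refine le_trans ?_ (add_le_add h1 h2)
    rcases hpar with h | h
    · have hKm : (K : ℝ) = m := by exact_mod_cast (by omega : K = m)
      rw [hNR, hKm]
      nlinarith [mul_nonneg (sub_nonneg.2 hmR) (sub_nonneg.2 hmR)]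
    · have hKm : (K : ℝ) = m + 1 := by exact_mod_cast (by omega : K = m + 1)
      rw [hNR, hKm]
      nlinarith [mul_nonneg (sub_nonneg.2 hmR) (sub_nonneg.2 hmR)]

end FPGM

/-- FPGM-OPG satisfies, for N ≥ 3,
min_{0≤i≤N} ‖∇̃F(x_i)‖ ≤ min( min_{0≤i≤N−1} ‖∇̃F(y_i)‖, ‖∇̃F(x_N)‖ )
≤ 2√6·LR/(N√(N−2)). -/
theorem fpgm_opg_cgm_bound
    {E : Type*} [NormedAddCommGroup E] [InnerProductSpace ℝ E]
    (L : ℝ) (hL : 0 < L)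
    (f : E → ℝ) (f' : E → E) (φ : E → ℝ)
    (hf : ConvexOn ℝ Set.univ f)
    (hgrad : ∀ z : E, HasFDerivAt f (innerSL ℝ (f' z)) z)
    (hLip : ∀ u v : E, ‖f' u - f' v‖ ≤ L * ‖u - v‖)
    (hφ : ConvexOn ℝ Set.univ φ)
    (p : E → E)
    (hp : ∀ y : E, IsMinOn
      (fun z => f y + ⟪f' y, z - y⟫ + L / 2 * ‖z - y‖ ^ 2 + φ z) Set.univ (p y))
    (xs : E) (hxs : IsMinOn (fun z => f z + φ z) Set.univ xs)
    (R : ℝ) (hR0 : 0 ≤ R)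
    (N : ℕ) (hN : 3 ≤ N)
    (t T : ℕ → ℝ) (ht0 : t 0 = 1)
    (ht1 : ∀ i, i + 2 ≤ (N + 1) / 2 → t (i + 1) = (1 + Real.sqrt (1 + 4 * t i ^ 2)) / 2)
    (ht2 : ∀ i, (N + 1) / 2 ≤ i + 1 → i + 2 ≤ N → t (i + 1) = ((N : ℝ) - i) / 2)
    (hT : ∀ i, T i = ∑ l ∈ Finset.range (i + 1), t l)
    (x y : ℕ → E)
    (hy0 : y 0 = x 0)
    (hx : ∀ i < N, x (i + 1) = p (y i))
    (hy : ∀ i, i + 1 < N → y (i + 1) = x (i + 1)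
        + ((T i - t i) * t (i + 1) / (t i * T (i + 1))) • (x (i + 1) - x i)
        + ((t i ^ 2 - T i) * t (i + 1) / (t i * T (i + 1))) • (x (i + 1) - y i))
    (hR : ‖x 0 - xs‖ ≤ R) :
    (Finset.range (N + 1)).inf' (Finset.nonempty_range_iff.mpr (Nat.succ_ne_zero N))
        (fun i => L * ‖x i - p (x i)‖)
      ≤ min ((Finset.range N).inf' (Finset.nonempty_range_iff.mpr (by omega))
          (fun i => L * ‖y i - p (y i)‖)) (L * ‖x N - p (x N)‖) ∧
    min ((Finset.range N).inf' (Finset.nonempty_range_iff.mpr (by omega))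
          (fun i => L * ‖y i - p (y i)‖)) (L * ‖x N - p (x N)‖)
      ≤ 2 * Real.sqrt 6 * L * R / ((N : ℝ) * Real.sqrt ((N : ℝ) - 2)) := by
  have hN0 : (3 : ℝ) ≤ N := by exact_mod_cast hN
  constructor
  · refine le_min (Finset.le_inf' _ _ fun i hi => ?_) ?_
    · have hi := Finset.mem_range.1 hi
      refine (Finset.inf'_le _ (Finset.mem_range.2 (by omega : i + 1 < N + 1))).trans ?_
      rw [hx i hi]
      exact mul_le_mul_of_nonneg_left
        (FPGM.p_nonexpansive hL hf hgrad hLip hφ hp (y i) (p (y i))) hL.le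
    · exact Finset.inf'_le (fun i => L * ‖x i - p (x i)‖) (Finset.self_mem_range_succ N)
  · obtain ⟨htpos, hw, hQ⟩ := FPGM.weight_bound hN ht0 ht1 ht2 hT
    have hE := FPGM.energy hf hgrad hLip hφ hp xs N t T htpos hT x y hy0 hx hy N le_rfl
    set G := min ((Finset.range N).inf' (Finset.nonempty_range_iff.mpr (by omega))
          (fun i => L * ‖y i - p (y i)‖)) (L * ‖x N - p (x N)‖) with hG
    have hG0 : 0 ≤ G := le_min (Finset.le_inf' _ _ fun i _ => by positivity) (by positivity)
    have hGy : ∀ i < N, G ^ 2 ≤ L ^ 2 * ‖x (i + 1) - y i‖ ^ 2 := by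
      intro i hi
      rw [← mul_pow, hx i hi, norm_sub_rev]
      exact pow_le_pow_left₀ hG0 ((min_le_left _ _).trans
        (Finset.inf'_le (fun i => L * ‖y i - p (y i)‖) (Finset.mem_range.2 hi))) 2
    have hGx : G ^ 2 ≤ L ^ 2 * ‖p (x N) - x N‖ ^ 2 := by
      rw [← mul_pow, norm_sub_rev]
      exact pow_le_pow_left₀ hG0 (min_le_right _ _) 2
    have hF : L / 2 * ‖p (x N) - x N‖ ^ 2 ≤ f (x N) + φ (x N) - (f xs + φ xs) := by
      have h1 := FPGM.prox_ineq hf hgrad hLip hφ hp (x N) (x N)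
      have h2 := isMinOn_iff.1 hxs (p (x N)) (Set.mem_univ _)
      simp only [sub_self, inner_zero_left, mul_zero, add_zero] at h1
      linarith
    have hS0 : 0 ≤ ∑ i ∈ Finset.range N, t i :=
      Finset.sum_nonneg fun i hi => (htpos i (Finset.mem_range.1 hi)).le
    have hA : G ^ 2 * ∑ i ∈ Finset.range N, (T i - t i ^ 2)
        ≤ L ^ 2 * ∑ i ∈ Finset.range N, (T i - t i ^ 2) * ‖x (i + 1) - y i‖ ^ 2 := by
      rw [Finset.mul_sum, Finset.mul_sum]
      refine Finset.sum_le_sum fun i hi => ?_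
      have hi := Finset.mem_range.1 hi
      nlinarith [mul_le_mul_of_nonneg_left (hGy i hi) (hw i hi)]
    have hB : G ^ 2 * ∑ i ∈ Finset.range N, t i
        ≤ 2 * L * ((∑ i ∈ Finset.range N, t i) * (f (x N) + φ (x N) - (f xs + φ xs))) := by
      have h1 : G ^ 2 ≤ 2 * L * (f (x N) + φ (x N) - (f xs + φ xs)) := by
        nlinarith [mul_le_mul_of_nonneg_left hF hL.le]
      nlinarith [mul_le_mul_of_nonneg_left h1 hS0]
    have hR2 : ‖x 0 - xs‖ ^ 2 ≤ R ^ 2 := pow_le_pow_left₀ (norm_nonneg _) hR 2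
    have hC : G ^ 2 * (∑ i ∈ Finset.range N, (T i - t i ^ 2) + ∑ i ∈ Finset.range N, t i)
        ≤ L ^ 2 * R ^ 2 := by
      have h1 := mul_le_mul_of_nonneg_left hE hL.le
      have h2 := mul_le_mul_of_nonneg_left hR2 (sq_nonneg L)
      have h3 : 0 ≤ L ^ 2 * ‖x 0 + ∑ i ∈ Finset.range N, t i • (x (i + 1) - y i) - xs‖ ^ 2 := by
        positivity
      linarith
    have hD := mul_le_mul_of_nonneg_left hQ (sq_nonneg G)
    have hsN : 0 < Real.sqrt ((N : ℝ) - 2) := Real.sqrt_pos.2 (by linarith)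
    rw [le_div_iff₀ (by positivity)]
    refine le_of_sq_le_sq ?_ (by positivity)
    rw [mul_pow, mul_pow, mul_pow, mul_pow, mul_pow, Real.sq_sqrt (by linarith),
      Real.sq_sqrt (by norm_num)]
    linarith
end
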